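/- arXiv:0901.1298 — 2 statements merged into one kernel-verified Lean document; each statement's English description precedes it below -/
import Mathlib

section
/- For every finite tree T with V vertices, enumerated 1,…,V, with Seifert matrix S, the graded Euler characteristic of the Seifert cohomology equals det(tS − Sᵀ); that is, in ℤ[t], Σ_{k,n} (−1)^k t^n dim SH^k(T,n) = det(tS − Sᵀ). -/
open Polynomial Matrix

attribute [local instance] Classical.propDecidable

namespace Seifert

variable {V : Type} [Fintype V]

/-- A matching of a graph `G`: a finite set of edges of `G` that are pairwise disjoint. -/
def IsMatching (G : SimpleGraph V) (R : Finset (Sym2 V)) : Prop :=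
  (∀ e ∈ R, e ∈ G.edgeSet) ∧
    ∀ e ∈ R, ∀ f ∈ R, e ≠ f → ∀ v : V, v ∈ e → v ∉ f

/-- A perfect matching: a matching covering every vertex. -/
def IsPerfectMatching (G : SimpleGraph V) (R : Finset (Sym2 V)) : Prop :=
  IsMatching G R ∧ ∀ v : V, ∃ e ∈ R, v ∈ e

/-- A configuration on `G`: a matching (the set of red edges) together with an assignment
of a sign (`true` = plus, `false` = minus) to every vertex not covered by a red edge;
vertices covered by a red edge get `none`. -/
structure Config (G : SimpleGraph V) where
  red : Finset (Sym2 V)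
  matching : IsMatching G red
  sign : V → Option Bool
  sign_none : ∀ v : V, sign v = none ↔ ∃ e ∈ red, v ∈ e

instance (G : SimpleGraph V) : Finite (Config G) :=
  Finite.of_injective (fun C => (C.red, C.sign)) (by
    rintro ⟨r, hr, s, hs⟩ ⟨r', hr', s', hs'⟩ h
    simp only [Prod.mk.injEq] at h
    obtain ⟨h1, h2⟩ := h
    subst h1; subst h2; rfl)

noncomputable instance (G : SimpleGraph V) : Fintype (Config G) := Fintype.ofFinite _

/-- The grading `Q`: the number of minuses. -/
noncomputable def Qg {G : SimpleGraph V} (C : Config G) : ℕ :=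
  (Finset.univ.filter fun v : V => C.sign v = some false).card

/-- The grading `E`: the number of minuses plus the number of red edges. -/
noncomputable def Eg {G : SimpleGraph V} (C : Config G) : ℕ := Qg C + C.red.card

/-- `DStep C C'` holds iff `C'` is one of the summands of `D(C)`: it is obtained from `C`
by deleting one red edge `e` and assigning a plus to one endpoint of `e` and a minus to
the other. -/
def DStep {G : SimpleGraph V} (C C' : Config G) : Prop :=
  ∃ e ∈ C.red, C'.red = C.red.erase e ∧
    (∀ x : V, x ∉ e → C'.sign x = C.sign x) ∧
    ∃ u v : V, e = s(u, v) ∧ C'.sign u = some true ∧ C'.sign v = some false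

/-- `dStep C C'` holds iff `C'` is one of the summands of `d(C)`: it is obtained from `C`
by changing the sign of one vertex from plus to minus. -/
def dStep {G : SimpleGraph V} (C C' : Config G) : Prop :=
  C'.red = C.red ∧ ∃ w : V, C.sign w = some true ∧ C'.sign w = some false ∧
    ∀ x : V, x ≠ w → C'.sign x = C.sign x

/-- The linear map on spaces of `F₂`-valued functions induced by a relation `r`:
the basis vector of `a` is sent to the sum of the basis vectors of all `b` with `r a b`. -/
noncomputable def sumLin {α β : Type} [Fintype α] (r : α → β → Prop) :
    (α → ZMod 2) →ₗ[ZMod 2] (β → ZMod 2) where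
  toFun f b := ∑ a : α, if r a b then f a else 0
  map_add' f g := by
    funext b
    simp only [Pi.add_apply]
    rw [← Finset.sum_add_distrib]
    exact Finset.sum_congr rfl fun a _ => by by_cases h : r a b <;> simp [h]
  map_smul' c f := by
    funext b
    simp only [RingHom.id_apply, Pi.smul_apply, smul_eq_mul, Finset.mul_sum]
    exact Finset.sum_congr rfl fun a _ => by by_cases h : r a b <;> simp [h]

/-- The differential `D` on the total Seifert complex `SC(T)`. -/
noncomputable def Dmap (G : SimpleGraph V) :
    (Config G → ZMod 2) →ₗ[ZMod 2] (Config G → ZMod 2) :=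
  sumLin DStep

/-- The differential `d` on the total Seifert complex `SC(T)`. -/
noncomputable def dmap (G : SimpleGraph V) :
    (Config G → ZMod 2) →ₗ[ZMod 2] (Config G → ZMod 2) :=
  sumLin dStep

/-- The graded piece `SC^k(T,n)`: the `F₂`-vector space with basis the configurations
with `Q = k` and `E = n`. -/
abbrev SC (G : SimpleGraph V) (k n : ℤ) : Type :=
  {C : Config G // (Qg C : ℤ) = k ∧ (Eg C : ℤ) = n} → ZMod 2

/-- The differential `D` between graded pieces. (Mathematically it is nonzero only
from `SC^k(T,n)` to `SC^{k+1}(T,n)`.) -/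
noncomputable def Dgr (G : SimpleGraph V) (k n k' n' : ℤ) :
    SC G k n →ₗ[ZMod 2] SC G k' n' :=
  sumLin fun C C' => DStep C.1 C'.1

/-- The dimension of the cohomology `ker g / im f` at the middle term of `A —f→ B —g→ C`
(taking the image of `f` intersected with the kernel of `g`). -/
noncomputable def cohDim {A B M : Type} [AddCommGroup A] [AddCommGroup B] [AddCommGroup M]
    [Module (ZMod 2) A] [Module (ZMod 2) B] [Module (ZMod 2) M]
    (f : A →ₗ[ZMod 2] B) (g : B →ₗ[ZMod 2] M) : ℕ :=
  Module.finrank (ZMod 2)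
    (LinearMap.ker g ⧸ (LinearMap.range f).comap (LinearMap.ker g).subtype)

/-- The dimension of the Seifert cohomology `SH^k(T,n)`. -/
noncomputable def SHdim (G : SimpleGraph V) (k n : ℤ) : ℕ :=
  cohDim (Dgr G (k - 1) n k n) (Dgr G k n (k + 1) n)

/-- The Seifert matrix of a graph with respect to an enumeration of its vertices. -/
noncomputable def seifertMatrix (G : SimpleGraph V) {m : ℕ} (e : V ≃ Fin m) :
    Matrix (Fin m) (Fin m) ℤ := fun i j =>
  if i = j then -1 else if i < j ∧ G.Adj (e.symm i) (e.symm j) then 1 else 0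

/-- The Alexander polynomial `det (t S - Sᵀ)` of a graph with respect to an enumeration
of its vertices. -/
noncomputable def alexDet (G : SimpleGraph V) {m : ℕ} (e : V ≃ Fin m) : Polynomial ℤ :=
  let S : Matrix (Fin m) (Fin m) (Polynomial ℤ) :=
    (seifertMatrix G e).map fun a => (Polynomial.C a : Polynomial ℤ)
  ((X : Polynomial ℤ) • S - Sᵀ).det

/-- The Alexander polynomial of a graph (or forest), defined as the matching polynomial
`Σ_R t^{|R|} (1-t)^{V - 2|R|}`, the sum being over all matchings `R`. -/
noncomputable def alexMatch (G : SimpleGraph V) : Polynomial ℤ :=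
  ∑ R : {R : Finset (Sym2 V) // IsMatching G R},
    X ^ R.1.card * (1 - X) ^ (Fintype.card V - 2 * R.1.card)

/-!
By the Euler–Poincaré principle the graded Euler characteristic is a signed count of configurations.
Summing over the signs for a fixed set `R` of red edges contributes `t^|R| (1 - t)^(V - 2|R|)`, so
for any graph the result is the matching polynomial. On the other side, a permutation contributes to
the Leibniz expansion of `det (t S - Sᵀ)` only if it moves every vertex to itself or to a neighbour.
In a forest such a permutation is an involution, that is, a matching, and its contribution is the
same as above.
-/

section LinearAlgebra

lemma sumLin_comp_sumLin_eq_zero {α β γ : Type} [Fintype α] [Fintype β] {r : α → β → Prop}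
    {s : β → γ → Prop} (h : ∀ a c, Even (Finset.univ.filter fun b => r a b ∧ s b c).card) :
    sumLin s ∘ₗ sumLin r = 0 := by
  refine LinearMap.ext fun f => funext fun c => ?_
  calc ∑ b, (if s b c then ∑ a, (if r a b then f a else 0) else 0)
      = ∑ b, ∑ a, if r a b ∧ s b c then f a else 0 := by
        refine Finset.sum_congr rfl fun b _ => ?_
        by_cases hb : s b c <;> simp [hb]
    _ = ∑ a, ∑ b, if r a b ∧ s b c then f a else 0 := Finset.sum_comm
    _ = ∑ a, ((Finset.univ.filter fun b => r a b ∧ s b c).card : ZMod 2) * f a := by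
        simp only [← Finset.sum_filter, Finset.sum_const, nsmul_eq_mul]
    _ = 0 := Finset.sum_eq_zero fun a _ => by
        rw [ZMod.natCast_eq_zero_iff_even.2 (h a c), zero_mul]

lemma cohDim_add_finrank_range_add_finrank_range {A B M : Type} [AddCommGroup A] [AddCommGroup B]
    [AddCommGroup M] [Module (ZMod 2) A] [Module (ZMod 2) B] [Module (ZMod 2) M]
    [Module.Finite (ZMod 2) B] {f : A →ₗ[ZMod 2] B} {g : B →ₗ[ZMod 2] M} (hgf : g ∘ₗ f = 0) :
    cohDim f g + Module.finrank (ZMod 2) (LinearMap.range f) +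
      Module.finrank (ZMod 2) (LinearMap.range g) = Module.finrank (ZMod 2) B := by
  have hle : LinearMap.range f ≤ LinearMap.ker g := LinearMap.range_le_ker_iff.2 hgf
  rw [cohDim, ← (Submodule.comapSubtypeEquivOfLe hle).finrank_eq,
    Submodule.finrank_quotient_add_finrank, add_comm, LinearMap.finrank_range_add_finrank_ker]

lemma sum_range_neg_one_pow_mul_eq {A : Type*} [Ring A] {h r c : ℕ → ℕ} {N : ℕ}
    (hc : ∀ k, h k + r k + r (k + 1) = c k) (h0 : r 0 = 0) (hN : r N = 0) :
    ∑ k ∈ Finset.range N, (-1 : A) ^ k * h k = ∑ k ∈ Finset.range N, (-1 : A) ^ k * c k := by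
  have telescope : ∑ k ∈ Finset.range N, ((-1 : A) ^ k * r k - (-1) ^ (k + 1) * r (k + 1)) = 0 := by
    rw [Finset.sum_range_sub' fun k => (-1 : A) ^ k * r k, h0, hN]
    simp
  rw [← add_zero (∑ k ∈ _, _), ← telescope, ← Finset.sum_add_distrib]
  refine Finset.sum_congr rfl fun k _ => ?_
  rw [← hc k, pow_succ]
  push_cast
  noncomm_ring

lemma finsum_finsum_eq_sum_range {A : Type*} [AddCommMonoid A] {f : ℕ → ℕ → A} {N : ℕ}
    (hf : ∀ k n, N ≤ k ∨ N ≤ n → f k n = 0) :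
    ∑ᶠ (k : ℕ) (n : ℕ), f k n = ∑ k ∈ Finset.range N, ∑ n ∈ Finset.range N, f k n := by
  have finsum_eq (g : ℕ → A) (hg : ∀ k, N ≤ k → g k = 0) :
      ∑ᶠ k, g k = ∑ k ∈ Finset.range N, g k :=
    finsum_eq_sum_of_support_subset g fun k hk => by
      simpa using lt_of_not_ge fun hNk => hk (hg k hNk)
  simp_rw [fun k => finsum_eq (f k) fun n hn => hf k n (Or.inr hn)]
  exact finsum_eq _ fun k hk => Finset.sum_eq_zero fun n _ => hf k n (Or.inl hk)

end LinearAlgebra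

section Matchings

variable {W : Type} {G : SimpleGraph W} {R R' : Finset (Sym2 W)} {u v : W}

/-- The set of vertices covered by a set of edges. -/
noncomputable def covered (R : Finset (Sym2 W)) : Finset W := R.biUnion Sym2.toFinset

lemma mem_covered : v ∈ covered R ↔ ∃ e ∈ R, v ∈ e := by
  simp only [covered, Finset.mem_biUnion, Sym2.mem_toFinset]

lemma mem_covered_iff_exists_mk_mem : v ∈ covered R ↔ ∃ w, s(v, w) ∈ R := by
  rw [mem_covered]
  constructor
  · rintro ⟨e, he, hv⟩
    obtain ⟨w, rfl⟩ := Sym2.mem_iff_exists.1 hv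
    exact ⟨w, he⟩
  · rintro ⟨w, hw⟩
    exact ⟨_, hw, Sym2.mem_mk_left v w⟩

namespace IsMatching

lemma eq_of_mem (hR : IsMatching G R) {e f : Sym2 W} (he : e ∈ R) (hf : f ∈ R) (hve : v ∈ e)
    (hvf : v ∈ f) : e = f :=
  by_contra fun hne => hR.2 e he f hf hne v hve hvf

lemma eq_of_mk_mem (hR : IsMatching G R) {w : W} (hv : s(u, v) ∈ R) (hw : s(u, w) ∈ R) : v = w :=
  Sym2.congr_right.1 (hR.eq_of_mem hv hw (Sym2.mem_mk_left u v) (Sym2.mem_mk_left u w))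

lemma adj (hR : IsMatching G R) (h : s(u, v) ∈ R) : G.Adj u v := hR.1 _ h

lemma pairwiseDisjoint_toFinset (hR : IsMatching G R) :
    (R : Set (Sym2 W)).PairwiseDisjoint Sym2.toFinset := by
  intro e he f hf hne
  refine Finset.disjoint_left.2 fun v hve hvf => ?_
  exact hR.2 e he f hf hne v (Sym2.mem_toFinset.1 hve) (Sym2.mem_toFinset.1 hvf)

lemma card_covered (hR : IsMatching G R) : (covered R).card = 2 * R.card := by
  rw [covered, Finset.card_biUnion hR.pairwiseDisjoint_toFinset, Finset.sum_const_nat (m := 2),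
    mul_comm]
  exact fun e he => Sym2.card_toFinset_of_not_isDiag e (G.not_isDiag_of_mem_edgeSet (hR.1 e he))

lemma prod_covered (hR : IsMatching G R) {A : Type*} [CommMonoid A] {f : W → A} {b : A}
    (hf : ∀ u v, s(u, v) ∈ R → f u * f v = b) : ∏ v ∈ covered R, f v = b ^ R.card := by
  rw [covered, Finset.prod_biUnion hR.pairwiseDisjoint_toFinset]
  refine Finset.prod_eq_pow_card fun e => ?_
  induction e with | _ u v
  intro he
  rw [Sym2.toFinset_mk_eq, Finset.prod_pair (hR.adj he).ne, hf u v he]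

end IsMatching

/-- The vertex joined to `v` by an edge of the matching `R`, or `v` itself if `R` does not cover
it. -/
noncomputable def partner (R : Finset (Sym2 W)) (v : W) : W :=
  if h : ∃ w, s(v, w) ∈ R then h.choose else v

lemma partner_of_notMem_covered (hv : v ∉ covered R) : partner R v = v :=
  dif_neg (mem_covered_iff_exists_mk_mem.not.1 hv)

namespace IsMatching

lemma partner_eq (hR : IsMatching G R) (h : s(u, v) ∈ R) : partner R u = v := by
  have hu : ∃ w, s(u, w) ∈ R := ⟨v, h⟩
  rw [partner, dif_pos hu]
  exact hR.eq_of_mk_mem hu.choose_spec h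

lemma mk_mem_iff (hR : IsMatching G R) : s(u, v) ∈ R ↔ u ≠ v ∧ partner R u = v := by
  refine ⟨fun h => ⟨(hR.adj h).ne, hR.partner_eq h⟩, fun ⟨hne, hv⟩ => ?_⟩
  by_cases hu : u ∈ covered R
  · obtain ⟨w, hw⟩ := mem_covered_iff_exists_mk_mem.1 hu
    rwa [← hv, hR.partner_eq hw]
  · exact absurd (partner_of_notMem_covered hu ▸ hv) hne

lemma partner_involutive (hR : IsMatching G R) : Function.Involutive (partner R) := by
  intro v
  by_cases hv : v ∈ covered R
  · obtain ⟨w, hw⟩ := mem_covered_iff_exists_mk_mem.1 hv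
    rw [hR.partner_eq hw, hR.partner_eq (Sym2.eq_swap ▸ hw)]
  · rw [partner_of_notMem_covered hv, partner_of_notMem_covered hv]

/-- The involution of the vertex set exchanging the endpoints of every edge of a matching. -/
noncomputable def toPerm (hR : IsMatching G R) : Equiv.Perm W := hR.partner_involutive.toPerm

lemma mk_mem_iff_toPerm (hR : IsMatching G R) : s(u, v) ∈ R ↔ u ≠ v ∧ hR.toPerm u = v :=
  hR.mk_mem_iff

lemma toPerm_injective (hR : IsMatching G R) (hR' : IsMatching G R')
    (h : hR.toPerm = hR'.toPerm) : R = R' := by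
  ext e
  induction e with | _ u v
  rw [hR.mk_mem_iff_toPerm, hR'.mk_mem_iff_toPerm, h]

lemma support_toPerm [Fintype W] (hR : IsMatching G R) : hR.toPerm.support = covered R := by
  ext v
  rw [Equiv.Perm.mem_support, mem_covered_iff_exists_mk_mem]
  simp only [hR.mk_mem_iff_toPerm, exists_eq_right', ne_comm]

lemma sign_toPerm [Fintype W] (hR : IsMatching G R) :
    Equiv.Perm.sign hR.toPerm = (-1) ^ R.card := by
  have hsq : hR.toPerm ^ 2 = 1 := Equiv.ext fun v => hR.partner_involutive v
  rw [Equiv.Perm.sign_of_pow_two_eq_one hsq, Equiv.Perm.card_fixedPoints,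
    Equiv.Perm.sum_cycleType, Nat.sub_sub_self (Finset.card_le_univ _), hR.support_toPerm,
    hR.card_covered, Nat.mul_div_cancel_left _ two_pos]

lemma prod_toPerm [Fintype W] (hR : IsMatching G R) {A : Type*} [CommMonoid A]
    {M : Matrix W W A} {a b : A} (hdiag : ∀ v, M v v = a)
    (hadj : ∀ u v, G.Adj u v → M u v * M v u = b) :
    ∏ v, M (hR.toPerm v) v = b ^ R.card * a ^ (Fintype.card W - 2 * R.card) := by
  rw [← Finset.prod_mul_prod_compl (covered R), ← hR.card_covered, ← Finset.card_compl]
  congr 1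
  · refine hR.prod_covered fun u v huv => ?_
    have hu : hR.toPerm u = v := hR.partner_eq huv
    have hv : hR.toPerm v = u := hR.partner_eq (Sym2.eq_swap ▸ huv)
    rw [hu, hv, hadj v u (hR.adj huv).symm]
  · refine Finset.prod_eq_pow_card fun v hv => ?_
    have hfix : hR.toPerm v = v := partner_of_notMem_covered (Finset.mem_compl.1 hv)
    rw [hfix, hdiag]

end IsMatching

/-- The pairs `{v, σ v}` with `σ v ≠ v`. For an involution `σ` these are the edges of a matching,
and this is inverse to `IsMatching.toPerm`. -/
noncomputable def movedPairs [Fintype W] (σ : Equiv.Perm W) : Finset (Sym2 W) :=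
  σ.support.image fun v => s(v, σ v)

lemma mk_mem_movedPairs [Fintype W] {σ : Equiv.Perm W} (hσ : Function.Involutive σ) :
    s(u, v) ∈ movedPairs σ ↔ u ≠ v ∧ σ u = v := by
  simp only [movedPairs, Finset.mem_image, Equiv.Perm.mem_support, Sym2.eq_iff]
  constructor
  · rintro ⟨w, hw, ⟨rfl, rfl⟩ | ⟨rfl, rfl⟩⟩
    · exact ⟨hw.symm, rfl⟩
    · exact ⟨hw, hσ w⟩
  · rintro ⟨hne, rfl⟩
    exact ⟨u, hne.symm, Or.inl ⟨rfl, rfl⟩⟩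

lemma isMatching_movedPairs [Fintype W] {σ : Equiv.Perm W} (hσ : Function.Involutive σ)
    (hG : ∀ v, σ v = v ∨ G.Adj v (σ v)) : IsMatching G (movedPairs σ) := by
  constructor
  · intro e
    induction e with | _ u v
    rw [mk_mem_movedPairs hσ]
    rintro ⟨hne, rfl⟩
    exact (hG u).resolve_left hne.symm
  · intro e he f hf hef v hve hvf
    obtain ⟨w, rfl⟩ := Sym2.mem_iff_exists.1 hve
    obtain ⟨w', rfl⟩ := Sym2.mem_iff_exists.1 hvf
    rw [mk_mem_movedPairs hσ] at he hf
    exact hef (by rw [← he.2, ← hf.2])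

lemma exists_toPerm_eq [Finite W] {σ : Equiv.Perm W} (hσ : Function.Involutive σ)
    (hG : ∀ v, σ v = v ∨ G.Adj v (σ v)) :
    ∃ (R : Finset (Sym2 W)) (hR : IsMatching G R), hR.toPerm = σ := by
  have := Fintype.ofFinite W
  refine ⟨movedPairs σ, isMatching_movedPairs hσ hG, Equiv.ext fun v => ?_⟩
  by_cases hv : σ v = v
  · rw [hv]
    refine partner_of_notMem_covered fun hcov => ?_
    obtain ⟨w, hw⟩ := mem_covered_iff_exists_mk_mem.1 hcov
    obtain ⟨hne, hvw⟩ := (mk_mem_movedPairs hσ).1 hw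
    exact hne (hv.symm.trans hvw)
  · exact (isMatching_movedPairs hσ hG).partner_eq ((mk_mem_movedPairs hσ).2 ⟨Ne.symm hv, rfl⟩)

end Matchings

section Determinant

-- Otherwise `σ` would map the component of `σ v`, which misses `v`, bijectively to itself.
lemma reachable_perm_apply {U : Type*} [Finite U] {H : SimpleGraph U} {σ : Equiv.Perm U} {v : U}
    (h : ∀ w, w ≠ v → H.Reachable w (σ w)) : H.Reachable (σ v) v := by
  by_contra hv
  have hmaps : Set.MapsTo σ {w | H.Reachable (σ v) w} {w | H.Reachable (σ v) w} := by
    intro w (hw : H.Reachable (σ v) w)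
    exact hw.trans (h w (by rintro rfl; exact hv hw))
  have hbij := ((Set.toFinite _).injOn_iff_bijOn_of_mapsTo hmaps).1 σ.injective.injOn
  obtain ⟨w, hw, hwv⟩ := hbij.surjOn (SimpleGraph.Reachable.refl (σ v))
  exact hv (σ.injective hwv ▸ hw)

lemma involutive_of_isAcyclic {U : Type*} [Finite U] {G : SimpleGraph U} (hG : G.IsAcyclic)
    {σ : Equiv.Perm U} (h : ∀ v, σ v = v ∨ G.Adj v (σ v)) : Function.Involutive σ := by
  intro v
  by_contra hne
  have hv : σ v ≠ v := fun hv => hne (by rw [hv, hv])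
  have hbridge := SimpleGraph.isAcyclic_iff_forall_adj_isBridge.1 hG ((h v).resolve_left hv)
  refine SimpleGraph.isBridge_iff.1 hbridge (reachable_perm_apply fun w hw => ?_).symm
  rcases h w with hfix | hadj
  · rw [hfix]
  · refine SimpleGraph.Adj.reachable (SimpleGraph.deleteEdges_adj.2 ⟨hadj, fun hmem => ?_⟩)
    rcases Sym2.eq_iff.1 hmem with ⟨hwv, -⟩ | ⟨rfl, hback⟩
    · exact hw hwv
    · exact hne hback

variable {W : Type} [Fintype W]

theorem det_eq_sum_isMatching_of_isAcyclic {G : SimpleGraph W} (hG : G.IsAcyclic) {A : Type*}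
    [CommRing A] {M : Matrix W W A} {a b : A} (hdiag : ∀ v, M v v = a)
    (hadj : ∀ u v, G.Adj u v → M u v * M v u = b)
    (hzero : ∀ u v, u ≠ v → ¬ G.Adj u v → M u v = 0) :
    M.det = ∑ R : {R : Finset (Sym2 W) // IsMatching G R},
      (-b) ^ R.1.card * a ^ (Fintype.card W - 2 * R.1.card) := by
  rw [Matrix.det_apply']
  symm
  refine Finset.sum_of_injOn (fun R => R.2.toPerm) ?_ (by simp) ?_ ?_
  · intro R _ R' _ h
    exact Subtype.ext (R.2.toPerm_injective R'.2 h)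
  · intro σ _ hσ
    obtain ⟨v, hv⟩ : ∃ v, ¬ (σ v = v ∨ G.Adj v (σ v)) := by
      by_contra! hmove
      obtain ⟨R, hR, rfl⟩ := exists_toPerm_eq (involutive_of_isAcyclic hG hmove) hmove
      exact hσ ⟨⟨R, hR⟩, by simp, rfl⟩
    obtain ⟨hne, hnadj⟩ := not_or.1 hv
    have hentry : M (σ v) v = 0 := hzero _ _ hne fun h => hnadj h.symm
    exact mul_eq_zero_of_right _ (Finset.prod_eq_zero (Finset.mem_univ v) hentry)
  · intro R _
    rw [R.2.prod_toPerm hdiag hadj, R.2.sign_toPerm, neg_pow b]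
    push_cast
    ring

theorem alexDet_eq_alexMatch {G : SimpleGraph W} (hG : G.IsAcyclic) {m : ℕ} (e : W ≃ Fin m) :
    alexDet G e = alexMatch G := by
  have hlt {u v : W} (h : G.Adj u v) : e u < e v ∨ e v < e u := (e.injective.ne h.ne).lt_or_gt
  rw [alexDet, ← Matrix.det_submatrix_equiv_self e,
    det_eq_sum_isMatching_of_isAcyclic hG (a := 1 - X) (b := -X), alexMatch]
  · simp only [neg_neg]
  · intro v
    simp only [submatrix_apply, Matrix.sub_apply, Matrix.smul_apply, Matrix.transpose_apply,
      map_apply, seifertMatrix, if_true, smul_eq_mul, map_neg, map_one]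
    ring
  · intro u v h
    rcases hlt h with huv | huv <;>
      simp [seifertMatrix, h, h.symm, h.ne, h.ne', huv, huv.not_gt]
  · intro u v hne hnadj
    simp [seifertMatrix, hne, hne.symm, hnadj, G.adj_comm v u]

end Determinant

section Differential

variable {W : Type} {G : SimpleGraph W} {C C' C'' D : Config G} {e f : Sym2 W} {x : W}

namespace Config

@[ext]
lemma ext (hred : C.red = D.red) (hsign : C.sign = D.sign) : C = D := by
  cases C
  cases D
  cases hred
  cases hsign
  rfl

lemma sign_eq_none_iff : C.sign x = none ↔ x ∈ covered C.red :=
  (C.sign_none x).trans mem_covered.symm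

lemma sign_eq_none_of_mem (he : e ∈ C.red) (hx : x ∈ e) : C.sign x = none :=
  (C.sign_none x).2 ⟨e, he, hx⟩

/-- The configuration obtained by colouring red an edge both of whose endpoints carry a sign. -/
noncomputable def insertEdge (C : Config G) (e : Sym2 W) (he : e ∈ G.edgeSet)
    (hsign : ∀ x ∈ e, C.sign x ≠ none) : Config G where
  red := insert e C.red
  matching := by
    have hdisj : ∀ f ∈ C.red, ∀ x ∈ e, x ∉ f := fun f hf x hxe hxf =>
      hsign x hxe (sign_eq_none_of_mem hf hxf)
    refine ⟨Finset.forall_mem_insert _ _ _ |>.2 ⟨he, C.matching.1⟩, ?_⟩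
    intro f hf g hg hfg x hxf hxg
    rcases Finset.mem_insert.1 hf with rfl | hfC <;> rcases Finset.mem_insert.1 hg with rfl | hgC
    · exact hfg rfl
    · exact hdisj g hgC x hxf hxg
    · exact hdisj f hfC x hxg hxf
    · exact C.matching.2 f hfC g hgC hfg x hxf hxg
  sign x := if x ∈ e then none else C.sign x
  sign_none x := by
    by_cases hx : x ∈ e <;> simp [hx, C.sign_none]

end Config

/-- `DStepAt e C C'` holds iff `C'` is one of the two summands of `D(C)` obtained by deleting the
red edge `e`. -/
structure DStepAt (e : Sym2 W) (C C' : Config G) : Prop where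
  mem : e ∈ C.red
  red_eq : C'.red = C.red.erase e
  sign_eq : ∀ x, x ∉ e → C'.sign x = C.sign x
  exists_signs : ∃ u v, e = s(u, v) ∧ C'.sign u = some true ∧ C'.sign v = some false

lemma DStep_iff_exists_DStepAt : DStep C C' ↔ ∃ e, DStepAt e C C' :=
  ⟨fun ⟨e, hmem, hred, hsign, hsigns⟩ => ⟨e, hmem, hred, hsign, hsigns⟩,
    fun ⟨e, h⟩ => ⟨e, h.mem, h.red_eq, h.sign_eq, h.exists_signs⟩⟩

namespace DStepAt

lemma sign_ne_none (h : DStepAt e C C') (hx : x ∈ e) : C'.sign x ≠ none := by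
  obtain ⟨u, v, rfl, hu, hv⟩ := h.exists_signs
  rcases Sym2.mem_iff.1 hx with rfl | rfl
  · simp [hu]
  · simp [hv]

lemma exists_swap (h : DStepAt e C C') (h' : DStepAt f C' C'') :
    ∃ D, DStepAt f C D ∧ DStepAt e D C'' := by
  obtain ⟨hfe, hf⟩ : f ≠ e ∧ f ∈ C.red := Finset.mem_erase.1 (h.red_eq ▸ h'.mem)
  have hdisj : ∀ x ∈ e, x ∉ f := C.matching.2 e h.mem f hf hfe.symm
  have hsign : ∀ x ∈ e, C''.sign x = C'.sign x := fun x hx => h'.sign_eq x (hdisj x hx)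
  have hred : C''.red = (C.red.erase f).erase e := by
    rw [h'.red_eq, h.red_eq, Finset.erase_right_comm]
  have he : e ∈ C.red.erase f := Finset.mem_erase.2 ⟨hfe.symm, h.mem⟩
  let D := C''.insertEdge e (C.matching.1 e h.mem) fun x hx => hsign x hx ▸ h.sign_ne_none hx
  have hDred : D.red = C.red.erase f := by
    rw [← Finset.insert_erase he, ← hred]
    rfl
  have hDsign : ∀ x ∉ e, D.sign x = C''.sign x := fun x hx => if_neg hx
  refine ⟨D, ⟨hf, hDred, fun x hxf => ?_, ?_⟩, ⟨hDred ▸ he, ?_, fun x hx => (hDsign x hx).symm, ?_⟩⟩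
  · by_cases hxe : x ∈ e
    · exact (if_pos hxe).trans (Config.sign_eq_none_of_mem h.mem hxe).symm
    · rw [hDsign x hxe, h'.sign_eq x hxf, h.sign_eq x hxe]
  · obtain ⟨u, v, rfl, hu, hv⟩ := h'.exists_signs
    have hue : u ∉ e := fun hue => hdisj u hue (Sym2.mem_mk_left u v)
    have hve : v ∉ e := fun hve => hdisj v hve (Sym2.mem_mk_right u v)
    exact ⟨u, v, rfl, (hDsign u hue).trans hu, (hDsign v hve).trans hv⟩
  · rw [hred, hDred]
  · obtain ⟨u, v, rfl, hu, hv⟩ := h.exists_signs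
    exact ⟨u, v, rfl, (hsign u (Sym2.mem_mk_left u v)).trans hu,
      (hsign v (Sym2.mem_mk_right u v)).trans hv⟩

lemma eq_or_eq {B : Config G} {g g' : Sym2 W} (he : DStepAt e C C') (hf : DStepAt f C' C'')
    (hg : DStepAt g C B) (hg' : DStepAt g' B C'') : g = e ∨ g = f := by
  have hgC'' : g ∉ C''.red := by simp [hg'.red_eq, hg.red_eq]
  by_contra! hne
  exact hgC'' (by simp [hf.red_eq, he.red_eq, hg.mem, hne])

end DStepAt

namespace DStep

lemma sign_eq (h : DStep C C') (hx : x ∉ covered C.red) : C'.sign x = C.sign x := by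
  obtain ⟨e, he⟩ := DStep_iff_exists_DStepAt.1 h
  exact he.sign_eq x fun hxe => hx (mem_covered.2 ⟨e, he.mem, hxe⟩)

lemma eq_of_red_eq (hC : DStep C C'') (hD : DStep D C'') (hred : C.red = D.red) : C = D := by
  refine Config.ext hred (funext fun x => ?_)
  by_cases hx : x ∈ covered C.red
  · rw [Config.sign_eq_none_iff.2 hx, Config.sign_eq_none_iff.2 (hred ▸ hx)]
  · rw [← hC.sign_eq hx, ← hD.sign_eq (hred ▸ hx)]

end DStep

/-- A path `C → C' → C''` is determined by the order in which its two edges are deleted, so there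
are two of them or none: this is `D ∘ D = 0` over `𝔽₂`. -/
lemma even_card_DStep_DStep [Fintype W] (C C'' : Config G) :
    Even (Finset.univ.filter fun C' : Config G => DStep C C' ∧ DStep C' C'').card := by
  rcases Finset.eq_empty_or_nonempty
    (Finset.univ.filter fun C' : Config G => DStep C C' ∧ DStep C' C'') with hempty | ⟨C', hC'⟩
  · simp [hempty]
  obtain ⟨hCC', hC'C''⟩ := (Finset.mem_filter.1 hC').2
  obtain ⟨e, he⟩ := DStep_iff_exists_DStepAt.1 hCC'
  obtain ⟨f, hf⟩ := DStep_iff_exists_DStepAt.1 hC'C''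
  obtain ⟨D, hfD, heD⟩ := he.exists_swap hf
  have hCD : DStep C D := DStep_iff_exists_DStepAt.2 ⟨f, hfD⟩
  have hDC'' : DStep D C'' := DStep_iff_exists_DStepAt.2 ⟨e, heD⟩
  have hne : C' ≠ D := by
    rintro rfl
    exact absurd hf.mem (hfD.red_eq ▸ Finset.notMem_erase f C.red)
  have hpair : (Finset.univ.filter fun B : Config G => DStep C B ∧ DStep B C'') = {C', D} := by
    ext B
    simp only [Finset.mem_filter_univ, Finset.mem_insert, Finset.mem_singleton]
    constructor
    · rintro ⟨hCB, hBC''⟩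
      obtain ⟨g, hg⟩ := DStep_iff_exists_DStepAt.1 hCB
      obtain ⟨g', hg'⟩ := DStep_iff_exists_DStepAt.1 hBC''
      rcases he.eq_or_eq hf hg hg' with rfl | rfl
      · exact Or.inl (hBC''.eq_of_red_eq hC'C'' (hg.red_eq.trans he.red_eq.symm))
      · exact Or.inr (hBC''.eq_of_red_eq hDC'' (hg.red_eq.trans hfD.red_eq.symm))
    · rintro (rfl | rfl)
      · exact ⟨hCC', hC'C''⟩
      · exact ⟨hCD, hDC''⟩
  rw [hpair, Finset.card_pair hne]
  exact even_two

namespace DStep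

variable [Fintype W]

lemma Qg_eq (h : DStep C C') : Qg C' = Qg C + 1 := by
  obtain ⟨_, he⟩ := DStep_iff_exists_DStepAt.1 h
  obtain ⟨u, v, rfl, hu, hv⟩ := he.exists_signs
  have hCu : C.sign u = none := Config.sign_eq_none_of_mem he.mem (Sym2.mem_mk_left u v)
  have hCv : C.sign v = none := Config.sign_eq_none_of_mem he.mem (Sym2.mem_mk_right u v)
  have hminus : (Finset.univ.filter fun x => C'.sign x = some false) =
      insert v (Finset.univ.filter fun x => C.sign x = some false) := by
    ext x
    simp only [Finset.mem_filter_univ, Finset.mem_insert]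
    by_cases hxv : x = v
    · simp [hxv, hv]
    by_cases hxu : x = u
    · simp [hxu, hu, hCu, hxu ▸ hxv]
    simp [he.sign_eq x (by simp [hxu, hxv]), hxv]
  rw [Qg, Qg, hminus, Finset.card_insert_of_notMem (by simp [hCv])]

lemma Eg_eq (h : DStep C C') : Eg C' = Eg C := by
  obtain ⟨e, he⟩ := DStep_iff_exists_DStepAt.1 h
  have hcard : C'.red.card + 1 = C.red.card := he.red_eq ▸ Finset.card_erase_add_one he.mem
  rw [Eg, Eg, h.Qg_eq, ← hcard]
  ring

end DStep

end Differential

section EulerCharacteristic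

lemma Qg_le_Eg {G : SimpleGraph V} (C : Config G) : Qg C ≤ Eg C := Nat.le_add_right _ _

lemma Dgr_comp_Dgr (G : SimpleGraph V) (k n : ℤ) :
    Dgr G k n (k + 1) n ∘ₗ Dgr G (k - 1) n k n = 0 := by
  refine sumLin_comp_sumLin_eq_zero fun C C'' => ?_
  convert! even_card_DStep_DStep C.1 C''.1 using 1
  refine Finset.card_nbij Subtype.val ?_ Subtype.val_injective.injOn ?_
  · intro C' hC'
    simpa using hC'
  · intro C' hC'
    obtain ⟨hCC', hC'C''⟩ := (Finset.mem_filter.1 hC').2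
    refine ⟨⟨C', ?_, ?_⟩, by simpa using ⟨hCC', hC'C''⟩, rfl⟩
    · rw [hCC'.Qg_eq, Nat.cast_succ, C.2.1, sub_add_cancel]
    · rw [hCC'.Eg_eq, C.2.2]

/-- The rank of the differential `D : SC^{k-1}(G,n) → SC^k(G,n)`. -/
noncomputable def rankD (G : SimpleGraph V) (k n : ℤ) : ℕ :=
  Module.finrank (ZMod 2) (LinearMap.range (Dgr G (k - 1) n k n))

lemma SHdim_add_rankD_add_rankD (G : SimpleGraph V) (k n : ℤ) :
    SHdim G k n + rankD G k n + rankD G (k + 1) n =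
      Fintype.card {C : Config G // (Qg C : ℤ) = k ∧ (Eg C : ℤ) = n} := by
  have hrank : rankD G (k + 1) n =
      Module.finrank (ZMod 2) (LinearMap.range (Dgr G k n (k + 1) n)) := by
    rw [rankD, add_sub_cancel_right]
  rw [hrank, SHdim, rankD, cohDim_add_finrank_range_add_finrank_range (Dgr_comp_Dgr G k n),
    Module.finrank_fintype_fun_eq_card]

lemma SHdim_add_rankD_add_rankD_eq_zero {G : SimpleGraph V} {k n : ℤ}
    (h : ∀ C : Config G, (Qg C : ℤ) = k → (Eg C : ℤ) ≠ n) :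
    SHdim G k n + rankD G k n + rankD G (k + 1) n = 0 := by
  rw [SHdim_add_rankD_add_rankD, Fintype.card_eq_zero_iff]
  exact ⟨fun C => h C.1 C.2.1 C.2.2⟩

lemma SHdim_eq_zero {G : SimpleGraph V} {k n : ℤ}
    (h : ∀ C : Config G, (Qg C : ℤ) = k → (Eg C : ℤ) ≠ n) : SHdim G k n = 0 :=
  (Nat.add_eq_zero_iff.1 (Nat.add_eq_zero_iff.1 (SHdim_add_rankD_add_rankD_eq_zero h)).1).1

lemma sum_range_neg_one_pow_mul_SHdim {G : SimpleGraph V} {A : Type*} [Ring A] {N : ℕ}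
    (hN : ∀ C : Config G, Qg C < N) (n : ℕ) :
    ∑ k ∈ Finset.range N, (-1 : A) ^ k * SHdim G k n =
      ∑ C : Config G with Eg C = n, (-1 : A) ^ Qg C := by
  rw [sum_range_neg_one_pow_mul_eq (r := fun k => rankD G k n)
    (c := fun k => (Finset.univ.filter fun C : Config G => Eg C = n ∧ Qg C = k).card)]
  · rw [← Finset.sum_fiberwise_of_maps_to' (t := Finset.range N) (g := Qg)
      (fun C _ => Finset.mem_range.2 (hN C)) fun k => (-1 : A) ^ k]
    refine Finset.sum_congr rfl fun k _ => ?_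
    rw [Finset.sum_const, nsmul_eq_mul, Finset.filter_filter, Nat.cast_comm]
  · intro k
    rw [Nat.cast_succ, SHdim_add_rankD_add_rankD, Fintype.card_subtype]
    simp only [Nat.cast_inj, and_comm]
  · have h := SHdim_add_rankD_add_rankD_eq_zero (G := G) (k := -1) (n := n) fun C hC => by omega
    exact (Nat.add_eq_zero_iff.1 h).2
  · have h := SHdim_add_rankD_add_rankD_eq_zero (G := G) (k := N) (n := n) fun C hC => by
      have := hN C
      omega
    exact (Nat.add_eq_zero_iff.1 (Nat.add_eq_zero_iff.1 h).1).2

theorem euler_char_eq_sum_config (G : SimpleGraph V) :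
    (∑ᶠ (k : ℕ) (n : ℕ),
        (-1 : Polynomial ℤ) ^ k * X ^ n * (SHdim G (k : ℤ) (n : ℤ) : Polynomial ℤ)) =
      ∑ C : Config G, (-1) ^ Qg C * X ^ Eg C := by
  obtain ⟨N, hE⟩ : ∃ N, ∀ C : Config G, Eg C < N :=
    (Finite.exists_le (Eg : Config G → ℕ)).imp' Nat.succ fun _ hM C => Nat.lt_succ_of_le (hM C)
  have hQ (C : Config G) : Qg C < N := (Qg_le_Eg C).trans_lt (hE C)
  have hzero (k n : ℕ) (hkn : N ≤ k ∨ N ≤ n) : SHdim G k n = 0 := by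
    refine SHdim_eq_zero fun C hC => ?_
    have hEC := hE C
    have hQC := hQ C
    omega
  rw [finsum_finsum_eq_sum_range (N := N) fun k n hkn => by simp [hzero k n hkn],
    Finset.sum_comm, ← Finset.sum_fiberwise_of_maps_to (t := Finset.range N) (g := Eg)
      fun C _ => Finset.mem_range.2 (hE C)]
  refine Finset.sum_congr rfl fun n _ => ?_
  calc ∑ k ∈ Finset.range N, (-1 : ℤ[X]) ^ k * X ^ n * (SHdim G k n : ℤ[X])
      = (∑ k ∈ Finset.range N, (-1) ^ k * (SHdim G k n : ℤ[X])) * X ^ n := by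
        rw [Finset.sum_mul]
        exact Finset.sum_congr rfl fun k _ => mul_right_comm _ _ _
    _ = ∑ C : Config G with Eg C = n, (-1) ^ Qg C * X ^ Eg C := by
        rw [sum_range_neg_one_pow_mul_SHdim hQ, Finset.sum_mul]
        exact Finset.sum_congr rfl fun C hC => by rw [(Finset.mem_filter.1 hC).2]

/-- The configuration with red edges `R` and with minuses at the vertices of `M` not covered by
`R`. -/
noncomputable def Config.ofMinus {G : SimpleGraph V} {R : Finset (Sym2 V)} (hR : IsMatching G R)
    (M : Finset V) : Config G where
  red := R
  matching := hR
  sign v := if v ∈ covered R then none else some (decide (v ∉ M))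
  sign_none v := by
    rw [← mem_covered]
    simp

lemma sum_config_red_eq {G : SimpleGraph V} {R : Finset (Sym2 V)} (hR : IsMatching G R) :
    ∑ C : Config G with C.red = R, (-1 : ℤ[X]) ^ Qg C * X ^ Eg C =
      X ^ R.card * (1 - X) ^ (Fintype.card V - 2 * R.card) := by
  rw [← hR.card_covered, ← Finset.card_compl, sub_eq_neg_add, ← Finset.sum_pow_mul_eq_add_pow,
    Finset.mul_sum]
  refine Finset.sum_bij' (fun C _ => Finset.univ.filter fun v => C.sign v = some false)
    (fun M _ => Config.ofMinus hR M) ?_ ?_ ?_ ?_ ?_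
  · rintro C hC
    obtain rfl := (Finset.mem_filter.1 hC).2
    refine Finset.mem_powerset.2 fun v hv => ?_
    rw [Finset.mem_compl, ← Config.sign_eq_none_iff, (Finset.mem_filter.1 hv).2]
    exact Option.some_ne_none _
  · intro M _
    simp [Config.ofMinus]
  · rintro C hC
    obtain rfl := (Finset.mem_filter.1 hC).2
    refine Config.ext rfl (funext fun v => ?_)
    rcases h : C.sign v with _ | _ | _ <;>
      simp [Config.ofMinus, ← Config.sign_eq_none_iff, h]
  · intro M hM
    ext v
    have hv : v ∈ M → v ∉ covered R := fun h => Finset.mem_compl.1 (Finset.mem_powerset.1 hM h)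
    simpa [Config.ofMinus] using hv
  · rintro C hC
    obtain rfl := (Finset.mem_filter.1 hC).2
    change _ = X ^ C.red.card * ((-X) ^ Qg C * 1 ^ _)
    rw [Eg, one_pow, neg_pow (X : ℤ[X])]
    ring

theorem euler_char_eq_alexMatch (G : SimpleGraph V) :
    (∑ᶠ (k : ℕ) (n : ℕ),
        (-1 : Polynomial ℤ) ^ k * X ^ n * (SHdim G (k : ℤ) (n : ℤ) : Polynomial ℤ)) =
      alexMatch G := by
  rw [euler_char_eq_sum_config, alexMatch,
    ← Finset.sum_fiberwise _ fun C : Config G =>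
      (⟨C.red, C.matching⟩ : {R : Finset (Sym2 V) // IsMatching G R})]
  refine Finset.sum_congr rfl fun R _ => ?_
  rw [← sum_config_red_eq R.2]
  simp only [← Subtype.coe_inj]

end EulerCharacteristic

theorem euler_char_eq_alexDet_general (G : SimpleGraph V) (hG : G.IsAcyclic)
    {m : ℕ} (e : V ≃ Fin m) :
    (∑ᶠ (k : ℕ) (n : ℕ),
        (-1 : Polynomial ℤ) ^ k * X ^ n * (SHdim G (k : ℤ) (n : ℤ) : Polynomial ℤ)) =
      alexDet G e :=
  (euler_char_eq_alexMatch G).trans (alexDet_eq_alexMatch hG e).symm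

/-- the graded Euler characteristic of the Seifert cohomology equals
`det (t S - Sᵀ)`: `Σ_{k,n} (-1)^k t^n dim SH^k(T,n) = det (t S - Sᵀ)` in `ℤ[t]`. -/
theorem euler_char_eq_alexDet (G : SimpleGraph V) (hG : G.IsTree)
    {m : ℕ} (e : V ≃ Fin m) :
    (∑ᶠ (k : ℕ) (n : ℕ),
        (-1 : Polynomial ℤ) ^ k * X ^ n * (SHdim G (k : ℤ) (n : ℤ) : Polynomial ℤ)) =
      alexDet G e :=
  euler_char_eq_alexDet_general G hG.isAcyclic e

end Seifert
end

section
/- Let A_n denote the path tree on n vertices (the Dynkin diagram of type A_n). Then for all integers k, m, dim SH^k(A_n, m) = 1 if k = m and 0 ≤ k ≤ n, and dim SH^k(A_n, m) = 0 otherwise; equivalently, the Poincaré polynomial of the Seifert cohomology of A_n is 1 + qt + q²t² + … + qⁿtⁿ. -/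
open Polynomial Matrix

attribute [local instance] Classical.propDecidable

namespace Seifert

variable {V : Type} [Fintype V]

/-!
A configuration on a path, read from left to right, is a word in the letters `plus`, `minus` and
`red`. Under this encoding the Seifert complexes of all the paths together form the free
differential graded algebra `F₂⟨plus, minus, red⟩` with `D red = plus * minus + minus * plus`, a
resolution of the polynomial ring `F₂[plus, minus]`. An explicit homotopy from the identity to the
projection `sort` onto the words `plus ⋯ plus minus ⋯ minus` shows that a cocycle `v` is a
coboundary iff `sort v = 0`. So the cohomology of the path on `n` vertices has one basis element for
each sorted word of length `n`, and the one with `k` minuses lies in bidegree `(k, k)`.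
-/

/-! ### The word algebra and its contraction -/

/-- The pieces from which a configuration on a path is built, read from one end: a vertex with a
plus, a vertex with a minus, or a red edge together with its two endpoints. -/
inductive Letter
  | plus
  | minus
  | red
  deriving DecidableEq

/-- The algebra `F₂⟨plus, minus, red⟩` of noncommutative polynomials. It is the sum over all `n` of
the Seifert complexes of the paths on `n` vertices. -/
abbrev WordAlgebra : Type := MonoidAlgebra (ZMod 2) (FreeMonoid Letter)

namespace WordAlgebra

open Letter LinearMap

/-- The basis of monomials; `w` stands for the product of its letters from left to right. -/
noncomputable def wordBasis : Module.Basis (List Letter) (ZMod 2) WordAlgebra :=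
  (MonoidAlgebra.basis (FreeMonoid Letter) (ZMod 2)).reindex FreeMonoid.toList

/-- The generator of the word algebra given by a letter. -/
noncomputable def gen (a : Letter) : WordAlgebra := wordBasis [a]

theorem wordBasis_nil : wordBasis [] = 1 := by
  simp [wordBasis, MonoidAlgebra.one_def]

theorem wordBasis_cons (a : Letter) (w : List Letter) :
    wordBasis (a :: w) = gen a * wordBasis w := by
  simp [gen, wordBasis, MonoidAlgebra.single_mul_single, FreeMonoid.ofList_cons]

theorem linearMap_ext {N : Type*} [AddCommMonoid N] [Module (ZMod 2) N]
    {f g : WordAlgebra →ₗ[ZMod 2] N} (one : f 1 = g 1)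
    (gen_mul : ∀ a x, f x = g x → f (gen a * x) = g (gen a * x)) : f = g := by
  refine wordBasis.ext fun w => ?_
  induction w with
  | nil => rwa [wordBasis_nil]
  | cons a w ih => rw [wordBasis_cons]; exact gen_mul a _ ih

/-- The linear map determined by its value `z` at `1` and the recursion
`f (gen a * x) = F a x + G a (f x)` on the first letter. -/
noncomputable def letterRec (z : WordAlgebra) (F G : Letter → WordAlgebra →ₗ[ZMod 2] WordAlgebra) :
    WordAlgebra →ₗ[ZMod 2] WordAlgebra :=
  wordBasis.constr (ZMod 2) (List.rec z fun a w fw => F a (wordBasis w) + G a fw)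

section letterRec

variable (z : WordAlgebra) (F G : Letter → WordAlgebra →ₗ[ZMod 2] WordAlgebra)

theorem letterRec_one : letterRec z F G 1 = z := by
  rw [← wordBasis_nil, letterRec, Module.Basis.constr_basis]

theorem letterRec_gen_mul (a : Letter) (x : WordAlgebra) :
    letterRec z F G (gen a * x) = F a x + G a (letterRec z F G x) := by
  have h : letterRec z F G ∘ₗ mulLeft (ZMod 2) (gen a) = F a + G a ∘ₗ letterRec z F G :=
    wordBasis.ext fun w => by simp [← wordBasis_cons, letterRec]
  exact LinearMap.congr_fun h x

end letterRec

/-- The values of `differential` on the generators. -/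
noncomputable def genDifferential : Letter → WordAlgebra
  | red => gen plus * gen minus + gen minus * gen plus
  | _ => 0

/-- The derivation with `differential red = plus * minus + minus * plus` that vanishes on `plus` and
`minus`. It restricts to `D` on the Seifert complex of each path. -/
noncomputable def differential : WordAlgebra →ₗ[ZMod 2] WordAlgebra :=
  letterRec 0 (fun a => mulLeft (ZMod 2) (genDifferential a)) fun a => mulLeft (ZMod 2) (gen a)

/-- The projection onto the span of the words `plus ⋯ plus minus ⋯ minus`: a word containing `red`
is sent to `0` and any other word is sorted. It is the quotient map onto the polynomial ring
`F₂[plus, minus]`, followed by its linear section given by the sorted words. -/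
noncomputable def sort : WordAlgebra →ₗ[ZMod 2] WordAlgebra :=
  letterRec 1 0 fun
    | plus => mulLeft (ZMod 2) (gen plus)
    | minus => mulRight (ZMod 2) (gen minus)
    | red => 0

/-- The map realizing, up to coboundaries, the move of a `minus` from the left end of a sorted word
to its right end: the word `plus ^ a * minus ^ b` is sent to
`∑ i < a, plus ^ i * red * plus ^ (a - 1 - i) * minus ^ b`. -/
noncomputable def slide : WordAlgebra →ₗ[ZMod 2] WordAlgebra :=
  letterRec 0
    (fun
      | plus => mulLeft (ZMod 2) (gen red)
      | _ => 0)
    fun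
      | plus => mulLeft (ZMod 2) (gen plus)
      | _ => 0

/-- The homotopy between the identity and `sort` that sorts a word by inserting its minuses, from
right to left, into the already sorted part. -/
noncomputable def contraction : WordAlgebra →ₗ[ZMod 2] WordAlgebra :=
  letterRec 0
    (fun
      | minus => slide ∘ₗ sort
      | _ => 0)
    fun a => mulLeft (ZMod 2) (gen a)

theorem differential_one : differential 1 = 0 := letterRec_one ..

theorem differential_gen_mul (a : Letter) (x : WordAlgebra) :
    differential (gen a * x) = genDifferential a * x + gen a * differential x :=
  letterRec_gen_mul ..

theorem differential_plus_mul (x : WordAlgebra) :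
    differential (gen plus * x) = gen plus * differential x := by
  simp [differential_gen_mul, genDifferential]

theorem differential_minus_mul (x : WordAlgebra) :
    differential (gen minus * x) = gen minus * differential x := by
  simp [differential_gen_mul, genDifferential]

theorem differential_red_mul (x : WordAlgebra) :
    differential (gen red * x) =
      (gen plus * gen minus + gen minus * gen plus) * x + gen red * differential x :=
  differential_gen_mul red x

theorem differential_mul_minus (x : WordAlgebra) :
    differential (x * gen minus) = differential x * gen minus := by
  have h : differential ∘ₗ mulRight (ZMod 2) (gen minus) =
      mulRight (ZMod 2) (gen minus) ∘ₗ differential :=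
    linearMap_ext (by simpa [differential_one] using differential_minus_mul 1)
      fun a x ih => by
        simp only [coe_comp, Function.comp_apply, mulRight_apply] at ih
        simp [differential_gen_mul, mul_assoc, add_mul, ih]
  exact LinearMap.congr_fun h x

theorem sort_one : sort 1 = 1 := letterRec_one ..

theorem sort_plus_mul (x : WordAlgebra) : sort (gen plus * x) = gen plus * sort x := by
  simp [sort, letterRec_gen_mul]

theorem sort_minus_mul (x : WordAlgebra) : sort (gen minus * x) = sort x * gen minus := by
  simp [sort, letterRec_gen_mul]

theorem sort_red_mul (x : WordAlgebra) : sort (gen red * x) = 0 := by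
  simp [sort, letterRec_gen_mul]

theorem slide_one : slide 1 = 0 := letterRec_one ..

theorem slide_plus_mul (x : WordAlgebra) :
    slide (gen plus * x) = gen red * x + gen plus * slide x := by
  simp [slide, letterRec_gen_mul]

theorem slide_minus_mul (x : WordAlgebra) : slide (gen minus * x) = 0 := by
  simp [slide, letterRec_gen_mul]

theorem slide_red_mul (x : WordAlgebra) : slide (gen red * x) = 0 := by
  simp [slide, letterRec_gen_mul]

theorem slide_mul_minus (x : WordAlgebra) : slide (x * gen minus) = slide x * gen minus := by
  have h : slide ∘ₗ mulRight (ZMod 2) (gen minus) = mulRight (ZMod 2) (gen minus) ∘ₗ slide :=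
    linearMap_ext (by simpa [slide_one] using slide_minus_mul 1) fun a x ih => by
      simp only [coe_comp, Function.comp_apply, mulRight_apply] at ih
      cases a <;> simp [slide_plus_mul, slide_minus_mul, slide_red_mul, mul_assoc, add_mul, ih]
  exact LinearMap.congr_fun h x

theorem contraction_one : contraction 1 = 0 := letterRec_one ..

theorem contraction_plus_mul (x : WordAlgebra) :
    contraction (gen plus * x) = gen plus * contraction x := by
  simp [contraction, letterRec_gen_mul]

theorem contraction_minus_mul (x : WordAlgebra) :
    contraction (gen minus * x) = slide (sort x) + gen minus * contraction x := by
  simp [contraction, letterRec_gen_mul]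

theorem contraction_red_mul (x : WordAlgebra) :
    contraction (gen red * x) = gen red * contraction x := by
  simp [contraction, letterRec_gen_mul]

instance : CharP WordAlgebra 2 := charP_of_injective_algebraMap' (ZMod 2) 2

theorem differential_sort (x : WordAlgebra) : differential (sort x) = 0 := by
  have h : differential ∘ₗ sort = 0 := by
    refine linearMap_ext (by simp [sort_one, differential_one]) fun a x ih => ?_
    simp only [coe_comp, Function.comp_apply, LinearMap.zero_apply] at ih ⊢
    cases a with
    | plus => rw [sort_plus_mul, differential_plus_mul, ih, mul_zero]
    | minus => rw [sort_minus_mul, differential_mul_minus, ih, zero_mul]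
    | red => rw [sort_red_mul, map_zero]
  exact LinearMap.congr_fun h x

theorem sort_differential (x : WordAlgebra) : sort (differential x) = 0 := by
  have h : sort ∘ₗ differential = 0 := by
    refine linearMap_ext (by simp [differential_one]) fun a x ih => ?_
    simp only [coe_comp, Function.comp_apply, LinearMap.zero_apply] at ih ⊢
    cases a with
    | plus => rw [differential_plus_mul, sort_plus_mul, ih, mul_zero]
    | minus => rw [differential_minus_mul, sort_minus_mul, ih, zero_mul]
    | red =>
      simp only [differential_red_mul, add_mul, mul_assoc, map_add, sort_plus_mul, sort_minus_mul,
        sort_red_mul, CharTwo.add_self_eq_zero]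
  exact LinearMap.congr_fun h x

theorem differential_slide_sort (x : WordAlgebra) :
    differential (slide (sort x)) = gen minus * sort x + sort x * gen minus := by
  have h : differential ∘ₗ slide ∘ₗ sort =
      mulLeft (ZMod 2) (gen minus) ∘ₗ sort + mulRight (ZMod 2) (gen minus) ∘ₗ sort := by
    refine linearMap_ext ?_ fun a x ih => ?_
    · simp [sort_one, slide_one, CharTwo.add_self_eq_zero]
    simp only [coe_comp, Function.comp_apply, LinearMap.add_apply, mulLeft_apply,
      mulRight_apply] at ih ⊢
    cases a with
    | plus =>
      rw [sort_plus_mul, slide_plus_mul, map_add, differential_red_mul, differential_sort,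
        differential_plus_mul, ih]
      grind
    | minus => rw [sort_minus_mul, slide_mul_minus, differential_mul_minus, ih, add_mul, mul_assoc]
    | red => simp [sort_red_mul]
  exact LinearMap.congr_fun h x

theorem differential_contraction_add (x : WordAlgebra) :
    differential (contraction x) + contraction (differential x) = x + sort x := by
  have h : differential ∘ₗ contraction + contraction ∘ₗ differential = LinearMap.id + sort := by
    refine linearMap_ext ?_ fun a x ih => ?_
    · simp [contraction_one, differential_one, sort_one, CharTwo.add_self_eq_zero]
    simp only [coe_comp, Function.comp_apply, LinearMap.add_apply, id_apply] at ih ⊢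
    rw [CharTwo.add_eq_iff_eq_add] at ih
    cases a with
    | plus =>
      rw [contraction_plus_mul, differential_plus_mul, differential_plus_mul, contraction_plus_mul,
        sort_plus_mul, ih]
      grind
    | minus =>
      rw [contraction_minus_mul, differential_minus_mul, contraction_minus_mul, map_add,
        differential_minus_mul, differential_slide_sort, sort_differential, sort_minus_mul,
        map_zero, ih]
      grind
    | red =>
      simp only [differential_red_mul, contraction_red_mul, add_mul, mul_assoc, map_add,
        contraction_plus_mul, contraction_minus_mul, sort_plus_mul, slide_plus_mul, sort_red_mul,
        ih]
      grind
  exact LinearMap.congr_fun h x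

theorem wordBasis_append (u v : List Letter) :
    wordBasis (u ++ v) = wordBasis u * wordBasis v := by
  simp [wordBasis, MonoidAlgebra.single_mul_single, FreeMonoid.ofList_append]

theorem sort_wordBasis_of_red_mem {w : List Letter} (h : red ∈ w) : sort (wordBasis w) = 0 := by
  induction w with
  | nil => simp at h
  | cons a w ih =>
    rw [wordBasis_cons]
    cases a with
    | plus => rw [sort_plus_mul, ih (by simpa using h), mul_zero]
    | minus => rw [sort_minus_mul, ih (by simpa using h), zero_mul]
    | red => exact sort_red_mul _

/-- The word `plus ⋯ plus minus ⋯ minus` with `a` pluses and `b` minuses. -/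
def sortedWord (a b : ℕ) : List Letter := List.replicate a plus ++ List.replicate b minus

theorem sort_wordBasis_of_red_notMem {w : List Letter} (h : red ∉ w) :
    sort (wordBasis w) = wordBasis (sortedWord (w.count plus) (w.count minus)) := by
  induction w with
  | nil => simpa [wordBasis_nil, sortedWord] using sort_one
  | cons a w ih =>
    rw [wordBasis_cons]
    cases a with
    | plus =>
      rw [sort_plus_mul, ih (by simpa using h), ← wordBasis_cons]
      simp [sortedWord, List.replicate_succ]
    | minus =>
      rw [sort_minus_mul, ih (by simpa using h), gen, ← wordBasis_append]
      simp [sortedWord, List.replicate_succ']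
    | red => simp at h

theorem repr_gen_mul_nil (a : Letter) (x : WordAlgebra) : wordBasis.repr (gen a * x) [] = 0 := by
  have h : wordBasis.coord [] ∘ₗ mulLeft (ZMod 2) (gen a) = 0 :=
    wordBasis.ext fun w => by simp [← wordBasis_cons]
  exact LinearMap.congr_fun h x

theorem repr_gen_mul_cons (a b : Letter) (x : WordAlgebra) (w : List Letter) :
    wordBasis.repr (gen a * x) (b :: w) = if a = b then wordBasis.repr x w else 0 := by
  have h : wordBasis.coord (b :: w) ∘ₗ mulLeft (ZMod 2) (gen a) =
      if a = b then wordBasis.coord w else 0 :=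
    wordBasis.ext fun v => by
      split_ifs with hab <;> simp [← wordBasis_cons, Finsupp.single_apply, hab]
  have hx := LinearMap.congr_fun h x
  split_ifs at hx ⊢ <;> exact hx

/-- `Step w w'` holds iff the word `w'` is one of the summands of the differential of `w`. -/
inductive Step : List Letter → List Letter → Prop
  | plus_minus (w : List Letter) : Step (red :: w) (plus :: minus :: w)
  | minus_plus (w : List Letter) : Step (red :: w) (minus :: plus :: w)
  | cons (a : Letter) {w w' : List Letter} : Step w w' → Step (a :: w) (a :: w')

theorem step_cons_iff {a : Letter} {w w' : List Letter} :
    Step (a :: w) w' ↔ (a = red ∧ (w' = plus :: minus :: w ∨ w' = minus :: plus :: w)) ∨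
      ∃ v, w' = a :: v ∧ Step w v := by
  constructor
  · rintro (_ | _ | h) <;> simp_all
  · rintro (⟨rfl, rfl | rfl⟩ | ⟨v, rfl, h⟩)
    exacts [.plus_minus w, .minus_plus w, h.cons a]

theorem repr_differential_wordBasis (w w' : List Letter) :
    wordBasis.repr (differential (wordBasis w)) w' = if Step w w' then 1 else 0 := by
  induction w generalizing w' with
  | nil =>
    have h : ¬ Step [] w' := by rintro ⟨⟩
    simp [wordBasis_nil, differential_one, h]
  | cons a w ih =>
    rw [wordBasis_cons, differential_gen_mul]
    cases w' with
    | nil =>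
      cases a <;> simp [step_cons_iff, repr_gen_mul_nil, genDifferential, add_mul, mul_assoc]
    | cons b v =>
      cases a <;> cases b <;>
        simp [step_cons_iff, repr_gen_mul_cons, genDifferential, add_mul, mul_assoc, ih,
          ← wordBasis_cons, Finsupp.single_apply, eq_comm]

end WordAlgebra

/-! ### Words as tilings of a path -/

section Words

open Letter

/-- The number of vertices of the path described by a word. -/
def vertexCount (w : List Letter) : ℕ := w.length + w.count red

/-- The letter of the word `w` whose piece of the path has leftmost vertex `i`. It is `none` if `i`
is the right endpoint of a red edge or lies beyond the end of the path. -/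
def letterAt : List Letter → ℕ → Option Letter
  | [], _ => none
  | a :: _, 0 => some a
  | plus :: w, i + 1 => letterAt w i
  | minus :: w, i + 1 => letterAt w i
  | red :: _, 1 => none
  | red :: w, i + 2 => letterAt w i

theorem letterAt_cons_succ {a : Letter} (ha : a ≠ red) (w : List Letter) (i : ℕ) :
    letterAt (a :: w) (i + 1) = letterAt w i := by
  cases a <;> first | rfl | contradiction

theorem exists_eq_cons_of_letterAt_zero {w : List Letter} {a : Letter}
    (h : letterAt w 0 = some a) : ∃ u, w = a :: u := by
  cases w with
  | nil => simp [letterAt] at h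
  | cons b u => exact ⟨u, by simpa [letterAt] using h⟩

/-- The functions on the vertices `0, 1, …` of a path on `n` vertices that arise as `letterAt w` for
a word `w`. -/
structure IsTiling (n : ℕ) (f : ℕ → Option Letter) : Prop where
  lt_of_red {i : ℕ} : f i = some red → i + 1 < n
  zero_eq_none_iff : f 0 = none ↔ n = 0
  succ_eq_none_iff (i : ℕ) : f (i + 1) = none ↔ n ≤ i + 1 ∨ f i = some red

theorem letterAt_injective : Function.Injective letterAt := by
  intro w w' h
  induction w generalizing w' with
  | nil => cases w' with
    | nil => rfl
    | cons => simpa [letterAt] using congrFun h 0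
  | cons a w ih => cases w' with
    | nil => simpa [letterAt] using congrFun h 0
    | cons b w' =>
      obtain rfl : a = b := by simpa [letterAt] using congrFun h 0
      congr 1
      refine ih (funext fun i => ?_)
      cases a
      exacts [congrFun h (i + 1), congrFun h (i + 1), congrFun h (i + 2)]

theorem eq_cons_cons_of_letterAt {w w' : List Letter} {a b : Letter} (ha : a ≠ red) (hb : b ≠ red)
    (h0 : letterAt w' 0 = some a) (h1 : letterAt w' 1 = some b)
    (h : ∀ j, letterAt w' (j + 2) = letterAt w j) : w' = a :: b :: w := by
  obtain ⟨v, rfl⟩ := exists_eq_cons_of_letterAt_zero h0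
  rw [letterAt_cons_succ ha] at h1
  obtain ⟨u, rfl⟩ := exists_eq_cons_of_letterAt_zero h1
  simp only [letterAt_cons_succ ha, letterAt_cons_succ hb] at h
  rw [letterAt_injective (funext h)]

theorem isTiling_letterAt (w : List Letter) : IsTiling (vertexCount w) (letterAt w) := by
  induction w with
  | nil => constructor <;> simp [letterAt, vertexCount]
  | cons a w ih =>
    obtain ⟨h1, h2, h3⟩ := ih
    refine ⟨fun {i} => ?_, ?_, fun i => ?_⟩
    · cases a <;> rcases i with _ | _ | i <;> grind [letterAt, vertexCount]
    · simp [letterAt, vertexCount]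
    · cases a <;> rcases i with _ | _ | i <;> grind [letterAt, vertexCount]

theorem IsTiling.exists_word {n : ℕ} {f : ℕ → Option Letter} (hf : IsTiling n f) :
    ∃ w, vertexCount w = n ∧ letterAt w = f := by
  induction n using Nat.strong_induction_on generalizing f with
  | _ n ih =>
    obtain ⟨h1, h2, h3⟩ := hf
    rcases h0 : f 0 with _ | a
    · exact ⟨[], by grind [vertexCount], by ext1 i; cases i <;> grind [letterAt]⟩
    by_cases ha : a = red
    · obtain ⟨w, hn, hw⟩ := ih (n - 2) (by grind) (f := fun i => f (i + 2)) <| by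
        constructor <;> grind
      refine ⟨a :: w, by grind [vertexCount], funext fun i => ?_⟩
      rcases i with _ | _ | i <;> grind [letterAt]
    · obtain ⟨w, hn, hw⟩ := ih (n - 1) (by grind) (f := fun i => f (i + 1)) <| by
        constructor <;> grind
      refine ⟨a :: w, by grind [vertexCount], funext fun i => ?_⟩
      cases a <;> rcases i with _ | i <;> grind [letterAt]

theorem count_letterAt (w : List Letter) (a : Letter) :
    Nat.count (fun i => letterAt w i = some a) (vertexCount w) = w.count a := by
  induction w with
  | nil => simp [vertexCount]
  | cons b w ih =>
    have hcount : vertexCount (b :: w) = vertexCount w + if b = red then 2 else 1 := by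
      grind [vertexCount]
    cases b <;> simpa [hcount, Nat.count_succ', letterAt, List.count_cons] using! ih

theorem vertexCount_eq_count (w : List Letter) :
    vertexCount w = w.count plus + w.count minus + 2 * w.count red := by
  induction w with
  | nil => rfl
  | cons a w ih => cases a <;> grind [vertexCount]

namespace WordAlgebra.Step

variable {w w' : List Letter}

theorem vertexCount_eq (h : Step w w') : vertexCount w' = vertexCount w := by
  induction h <;> grind [vertexCount]

theorem count_minus (h : Step w w') : w'.count minus = w.count minus + 1 := by
  induction h <;> grind

theorem count_red (h : Step w w') : w.count red = w'.count red + 1 := by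
  induction h <;> grind

end WordAlgebra.Step

open WordAlgebra

/-- `Splits f g` holds iff `g` is obtained from `f` by replacing one red edge by a plus and a minus
on its endpoints. -/
def Splits (f g : ℕ → Option Letter) : Prop :=
  ∃ i, f i = some red ∧ (∀ j, j ≠ i → j ≠ i + 1 → g j = f j) ∧
    (g i = some plus ∧ g (i + 1) = some minus ∨ g i = some minus ∧ g (i + 1) = some plus)

theorem splits_letterAt_of_step {w w' : List Letter} (h : Step w w') :
    Splits (letterAt w) (letterAt w') := by
  induction h with
  | plus_minus w =>
    refine ⟨0, rfl, fun j _ _ => ?_, .inl ⟨rfl, rfl⟩⟩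
    rcases j with _ | _ | j <;> grind [letterAt]
  | minus_plus w =>
    refine ⟨0, rfl, fun j _ _ => ?_, .inr ⟨rfl, rfl⟩⟩
    rcases j with _ | _ | j <;> grind [letterAt]
  | @cons a w w' _ ih =>
    obtain ⟨i, hi, hne, h⟩ := ih
    refine ⟨i + if a = red then 2 else 1, by cases a <;> exact hi, fun j _ _ => ?_, ?_⟩
    · cases a <;> rcases j with _ | _ | j <;> grind [letterAt]
    · cases a <;> exact h

theorem step_of_splits_letterAt {w w' : List Letter} (h : Splits (letterAt w) (letterAt w')) :
    Step w w' := by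
  induction w generalizing w' with
  | nil => obtain ⟨i, hi, -⟩ := h; simp [letterAt] at hi
  | cons a w ih =>
    obtain ⟨i, hi, hne, h⟩ := h
    by_cases ha : a = red
    · subst ha
      rcases i with _ | _ | i
      · have htail (j : ℕ) : letterAt w' (j + 2) = letterAt w j :=
          hne (j + 2) (by omega) (by omega)
        rcases h with ⟨h0, h1⟩ | ⟨h0, h1⟩
        · rw [eq_cons_cons_of_letterAt (by simp) (by simp) h0 h1 htail]
          exact .plus_minus w
        · rw [eq_cons_cons_of_letterAt (by simp) (by simp) h0 h1 htail]
          exact .minus_plus w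
      · simp [letterAt] at hi
      · obtain ⟨u, rfl⟩ := exists_eq_cons_of_letterAt_zero (hne 0 (by omega) (by omega))
        exact .cons _ (ih ⟨i, hi, fun j _ _ => hne (j + 2) (by omega) (by omega), h⟩)
    · rcases i with _ | i
      · exact absurd (by simpa [letterAt] using hi) ha
      · obtain ⟨u, rfl⟩ := exists_eq_cons_of_letterAt_zero (hne 0 (by omega) (by omega))
        simp only [letterAt_cons_succ ha] at hi h
        refine .cons _ (ih ⟨i, hi, fun j _ _ => ?_, h⟩)
        simpa only [letterAt_cons_succ ha] using hne (j + 1) (by omega) (by omega)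

theorem step_iff_splits {w w' : List Letter} :
    Step w w' ↔ Splits (letterAt w) (letterAt w') :=
  ⟨splits_letterAt_of_step, step_of_splits_letterAt⟩

end Words

/-! ### Configurations on a path as words -/

section Configurations

open Letter

variable {n : ℕ}

/-- Configurations on the path with `n` vertices. -/
abbrev PathConfig (n : ℕ) : Type := Config (SimpleGraph.pathGraph n)

/-- The edge of the path joining the vertices `i` and `i + 1`. -/
def edge (i : ℕ) (h : i + 1 < n) : Sym2 (Fin n) := s(⟨i, by omega⟩, ⟨i + 1, h⟩)

theorem mem_edge {i : ℕ} {h : i + 1 < n} {v : Fin n} :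
    v ∈ edge i h ↔ (v : ℕ) = i ∨ (v : ℕ) = i + 1 := by
  simp [edge, Fin.ext_iff]

theorem edge_inj {i j : ℕ} {hi : i + 1 < n} {hj : j + 1 < n} : edge i hi = edge j hj ↔ i = j := by
  simp only [edge, Sym2.eq_iff, Fin.mk.injEq]
  omega

theorem mem_edgeSet_pathGraph {e : Sym2 (Fin n)} :
    e ∈ (SimpleGraph.pathGraph n).edgeSet ↔ ∃ i, ∃ h : i + 1 < n, e = edge i h := by
  induction e with
  | _ u v =>
    simp only [SimpleGraph.mem_edgeSet, SimpleGraph.pathGraph_adj, edge, Sym2.eq_iff, Fin.ext_iff]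
    constructor
    · rintro (h | h)
      · exact ⟨u, by omega, by omega⟩
      · exact ⟨v, by omega, by omega⟩
    · rintro ⟨i, _, h'⟩
      omega

namespace PathConfig

/-- `RedAt C i` holds iff the edge joining the vertices `i` and `i + 1` is red. -/
def RedAt (C : PathConfig n) (i : ℕ) : Prop := ∃ h : i + 1 < n, edge i h ∈ C.red

theorem mem_red_iff {C : PathConfig n} {e : Sym2 (Fin n)} :
    e ∈ C.red ↔ ∃ i, ∃ h : i + 1 < n, e = edge i h ∧ C.RedAt i := by
  constructor
  · intro he
    obtain ⟨i, h, rfl⟩ := mem_edgeSet_pathGraph.1 (C.matching.1 e he)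
    exact ⟨i, h, rfl, h, he⟩
  · rintro ⟨i, _, rfl, _, he⟩
    exact he

theorem RedAt.not_succ {C : PathConfig n} {i : ℕ} (h : C.RedAt i) : ¬ C.RedAt (i + 1) := by
  rintro ⟨h2, he2⟩
  obtain ⟨h1, he1⟩ := h
  exact C.matching.2 _ he1 _ he2 (by simp [edge_inj]) ⟨i + 1, h1⟩ (by simp [mem_edge])
    (by simp [mem_edge])

theorem sign_eq_none_iff {C : PathConfig n} {v : Fin n} :
    C.sign v = none ↔ C.RedAt v ∨ ∃ i, i + 1 = (v : ℕ) ∧ C.RedAt i := by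
  rw [C.sign_none]
  constructor
  · rintro ⟨e, he, hv⟩
    obtain ⟨i, h, rfl, hi⟩ := mem_red_iff.1 he
    rcases mem_edge.1 hv with hv | hv
    exacts [.inl (hv ▸ hi), .inr ⟨i, hv.symm, hi⟩]
  · rintro (⟨h, he⟩ | ⟨i, hi, h, he⟩)
    exacts [⟨_, he, mem_edge.2 (.inl rfl)⟩, ⟨_, he, mem_edge.2 (.inr hi.symm)⟩]

end PathConfig

/-- The letter of a signed vertex. -/
def letterOfSign (b : Bool) : Letter := if b then plus else minus

/-- The sign of the vertex at which a piece starts, in the encoding of `Config.sign`. -/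
def signOfLetter : Letter → Option Bool
  | plus => some true
  | minus => some false
  | red => none

namespace PathConfig

/-- The pieces of a configuration on a path, indexed by their leftmost vertices. -/
noncomputable def tile (C : PathConfig n) (i : ℕ) : Option Letter :=
  if C.RedAt i then some red
  else if h : i < n then (C.sign ⟨i, h⟩).map letterOfSign else none

theorem tile_eq_red_iff {C : PathConfig n} {i : ℕ} : C.tile i = some red ↔ C.RedAt i := by
  simp only [tile]
  split_ifs with h h'
  · simp [h]
  · rcases C.sign ⟨i, h'⟩ with _ | _ | _ <;> simp [letterOfSign, h]
  · simp [h]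

theorem tile_eq_none_of_le {C : PathConfig n} {i : ℕ} (h : n ≤ i) : C.tile i = none := by
  have hred : ¬ C.RedAt i := fun ⟨h', _⟩ => by omega
  simp [tile, hred, h]

theorem sign_eq (C : PathConfig n) (v : Fin n) : C.sign v = (C.tile v).bind signOfLetter := by
  simp only [tile, v.isLt, dite_true]
  split_ifs with h
  · exact sign_eq_none_iff.2 (.inl h)
  · rcases C.sign v with _ | _ | _ <;> simp [letterOfSign, signOfLetter]

theorem tile_eq_none_iff {C : PathConfig n} {v : Fin n} :
    C.tile v = none ↔ C.sign v = none ∧ ¬ C.RedAt v := by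
  simp only [tile, v.isLt, dite_true]
  split_ifs with h <;> simp [h]

theorem isTiling_tile (C : PathConfig n) : IsTiling n C.tile where
  lt_of_red h := (tile_eq_red_iff.1 h).1
  zero_eq_none_iff := by
    refine ⟨fun h => ?_, fun h => tile_eq_none_of_le h.le⟩
    by_contra hn
    obtain ⟨hs, hr⟩ := (tile_eq_none_iff (v := ⟨0, by omega⟩)).1 h
    rcases sign_eq_none_iff.1 hs with h0 | ⟨i, hi, -⟩
    exacts [hr h0, by simp at hi]
  succ_eq_none_iff i := by
    rw [tile_eq_red_iff]
    by_cases hi : n ≤ i + 1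
    · simp [hi, tile_eq_none_of_le hi]
    · have := tile_eq_none_iff (C := C) (v := ⟨i + 1, by omega⟩)
      simp only [sign_eq_none_iff, Nat.add_right_cancel_iff, exists_eq_left] at this
      grind [RedAt.not_succ]

theorem tile_injective : Function.Injective (tile (n := n)) := by
  intro C C' h
  have hred : C.red = C'.red := by
    ext e
    simp only [mem_red_iff, ← tile_eq_red_iff, h]
  have hsign : C.sign = C'.sign := funext fun v => by rw [sign_eq, sign_eq, h]
  cases C; cases C'; simp_all

theorem tile_eq_iff {C : PathConfig n} {f : ℕ → Option Letter} (hf : ∀ i, n ≤ i → f i = none) :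
    C.tile = f ↔ (∀ i, C.RedAt i ↔ f i = some red) ∧
      ∀ v : Fin n, C.sign v = (f v).bind signOfLetter := by
  constructor
  · rintro rfl
    exact ⟨fun i => tile_eq_red_iff.symm, C.sign_eq⟩
  · rintro ⟨hred, hsign⟩
    ext1 i
    by_cases hi : n ≤ i
    · rw [tile_eq_none_of_le hi, hf i hi]
    · have := hsign ⟨i, by omega⟩
      rcases hfi : f i with _ | _ | _ | _ <;>
        simp_all [tile, signOfLetter, letterOfSign]

end PathConfig

namespace IsTiling

variable {f : ℕ → Option Letter}

theorem eq_none_of_le (hf : IsTiling n f) {i : ℕ} (hi : n ≤ i) : f i = none := by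
  cases i <;> grind [IsTiling]

theorem eq_none_iff (hf : IsTiling n f) {i : ℕ} (hi : i < n) :
    f i = none ↔ ∃ j, j + 1 = i ∧ f j = some red := by
  cases i <;> grind [IsTiling]

/-- The red edges of a tiling. -/
noncomputable def redEdges (n : ℕ) (f : ℕ → Option Letter) : Finset (Sym2 (Fin n)) :=
  {e | ∃ i, ∃ h : i + 1 < n, e = edge i h ∧ f i = some red}

theorem mem_redEdges {e : Sym2 (Fin n)} :
    e ∈ redEdges n f ↔ ∃ i, ∃ h : i + 1 < n, e = edge i h ∧ f i = some red := by
  simp [redEdges]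

theorem edge_mem_redEdges {i : ℕ} {h : i + 1 < n} :
    edge i h ∈ redEdges n f ↔ f i = some red := by
  simp only [mem_redEdges, edge_inj]
  grind

theorem isMatching_redEdges (hf : IsTiling n f) :
    IsMatching (SimpleGraph.pathGraph n) (redEdges n f) := by
  refine ⟨fun e he => ?_, fun e he e' he' hne v hv hv' => hne ?_⟩
  · obtain ⟨i, h, rfl, -⟩ := mem_redEdges.1 he
    exact mem_edgeSet_pathGraph.2 ⟨i, h, rfl⟩
  · obtain ⟨i, h, rfl, hi⟩ := mem_redEdges.1 he
    obtain ⟨j, h', rfl, hj⟩ := mem_redEdges.1 he'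
    rw [mem_edge] at hv hv'
    rw [edge_inj]
    have hi' := hf.succ_eq_none_iff i
    have hj' := hf.succ_eq_none_iff j
    grind

theorem sign_none (hf : IsTiling n f) (v : Fin n) :
    (f v).bind signOfLetter = none ↔ ∃ e ∈ redEdges n f, v ∈ e := by
  have hsign : (f v).bind signOfLetter = none ↔ f v = none ∨ f v = some red := by
    rcases f v with _ | _ | _ | _ <;> simp [signOfLetter]
  rw [hsign, hf.eq_none_iff v.isLt]
  constructor
  · rintro (⟨j, hj, hred⟩ | hred)
    · have hj' : j + 1 < n := by omega
      exact ⟨edge j hj', edge_mem_redEdges.2 hred, mem_edge.2 (.inr hj.symm)⟩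
    · exact ⟨edge v (hf.lt_of_red hred), edge_mem_redEdges.2 hred, mem_edge.2 (.inl rfl)⟩
  · rintro ⟨e, he, hv⟩
    obtain ⟨i, h, rfl, hred⟩ := mem_redEdges.1 he
    rcases mem_edge.1 hv with hv | hv
    exacts [.inr (hv ▸ hred), .inl ⟨i, hv.symm, hred⟩]

theorem exists_tile_eq (hf : IsTiling n f) : ∃ C : PathConfig n, C.tile = f := by
  refine ⟨⟨redEdges n f, hf.isMatching_redEdges, _, hf.sign_none⟩,
    (PathConfig.tile_eq_iff fun i => hf.eq_none_of_le).2 ⟨fun i => ?_, fun v => rfl⟩⟩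
  simp only [PathConfig.RedAt, edge_mem_redEdges]
  grind [IsTiling]

end IsTiling

namespace PathConfig

theorem tile_eq_plus_iff {C : PathConfig n} {v : Fin n} :
    C.tile v = some plus ↔ C.sign v = some true := by
  rw [sign_eq]
  rcases C.tile v with _ | _ | _ | _ <;> simp [signOfLetter]

theorem tile_eq_minus_iff {C : PathConfig n} {v : Fin n} :
    C.tile v = some minus ↔ C.sign v = some false := by
  rw [sign_eq]
  rcases C.tile v with _ | _ | _ | _ <;> simp [signOfLetter]

theorem Qg_eq_count_tile (C : PathConfig n) :
    Qg C = Nat.count (fun i => C.tile i = some minus) n := by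
  simp only [Qg, ← tile_eq_minus_iff, Nat.count_eq_card_filter_range, Finset.card_filter,
    Finset.sum_range]

theorem card_red_eq_count_tile (C : PathConfig n) :
    C.red.card = Nat.count (fun i => C.tile i = some red) n := by
  rw [Nat.count_eq_card_filter_range]
  refine (Finset.card_bij
    (fun i hi => edge i (C.isTiling_tile.lt_of_red (Finset.mem_filter.1 hi).2)) ?_ ?_ ?_).symm
  · intro i hi
    exact (tile_eq_red_iff.1 (Finset.mem_filter.1 hi).2).2
  · intro i _ j _ hij
    exact edge_inj.1 hij
  · intro e he
    obtain ⟨i, h, rfl, hi⟩ := mem_red_iff.1 he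
    exact ⟨i, Finset.mem_filter.2 ⟨Finset.mem_range.2 (by omega), tile_eq_red_iff.2 hi⟩, rfl⟩

-- The decidability instance is arbitrary because the one in `DStep` is classical.
theorem red_eq_erase_edge_iff {_ : DecidableEq (Sym2 (Fin n))} {C C' : PathConfig n} {i : ℕ}
    {h : i + 1 < n} :
    C'.red = C.red.erase (edge i h) ↔ ∀ j, C'.RedAt j ↔ C.RedAt j ∧ j ≠ i := by
  constructor
  · intro hred j
    simp only [RedAt, hred, Finset.mem_erase, ne_eq, edge_inj]
    grind
  · intro hred
    ext e
    simp only [Finset.mem_erase, mem_red_iff, hred]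
    grind [edge_inj]

theorem splits_tile_of_dStep {C C' : PathConfig n} (h : DStep C C') : Splits C.tile C'.tile := by
  obtain ⟨e, he, hred, hne, u, v, huv, hu, hv⟩ := h
  obtain ⟨i, hin, rfl, hi⟩ := mem_red_iff.1 he
  rw [red_eq_erase_edge_iff] at hred
  refine ⟨i, tile_eq_red_iff.2 hi, fun j hj hj' => ?_, ?_⟩
  · rcases le_or_gt n j with hjn | hjn
    · rw [tile_eq_none_of_le hjn, tile_eq_none_of_le hjn]
    · have hsign : C'.sign ⟨j, hjn⟩ = C.sign ⟨j, hjn⟩ := hne _ (by simp [mem_edge, hj, hj'])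
      simp [tile, hred, hj, hjn, hsign]
  · rw [← tile_eq_plus_iff] at hu
    rw [← tile_eq_minus_iff] at hv
    rcases Sym2.eq_iff.1 huv with ⟨rfl, rfl⟩ | ⟨rfl, rfl⟩
    exacts [.inl ⟨hu, hv⟩, .inr ⟨hv, hu⟩]

theorem dStep_of_splits_tile {C C' : PathConfig n} (h : Splits C.tile C'.tile) : DStep C C' := by
  obtain ⟨i, hi, hne, hends⟩ := h
  obtain ⟨hin, he⟩ := tile_eq_red_iff.1 hi
  refine ⟨edge i hin, he, red_eq_erase_edge_iff.2 fun j => ?_, fun v hv => ?_, ?_⟩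
  · have hnone := C.isTiling_tile.succ_eq_none_iff i
    simp only [← tile_eq_red_iff]
    grind
  · rw [mem_edge, not_or] at hv
    rw [sign_eq, sign_eq, hne v hv.1 hv.2]
  · rcases hends with ⟨h1, h2⟩ | ⟨h1, h2⟩
    · exact ⟨⟨i, by omega⟩, ⟨i + 1, hin⟩, rfl, tile_eq_plus_iff.1 h1, tile_eq_minus_iff.1 h2⟩
    · exact ⟨⟨i + 1, hin⟩, ⟨i, by omega⟩, Sym2.eq_swap, tile_eq_plus_iff.1 h2,
        tile_eq_minus_iff.1 h1⟩

/-- The word of a configuration on a path, obtained by reading its pieces from left to right. -/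
noncomputable def word (C : PathConfig n) : List Letter := C.isTiling_tile.exists_word.choose

theorem vertexCount_word (C : PathConfig n) : vertexCount C.word = n :=
  C.isTiling_tile.exists_word.choose_spec.1

theorem letterAt_word (C : PathConfig n) : letterAt C.word = C.tile :=
  C.isTiling_tile.exists_word.choose_spec.2

theorem word_injective : Function.Injective (word (n := n)) := fun C C' h =>
  tile_injective (by rw [← letterAt_word, h, letterAt_word])

theorem exists_word_eq {w : List Letter} (hw : vertexCount w = n) :
    ∃ C : PathConfig n, C.word = w := by
  subst hw
  obtain ⟨C, hC⟩ := (isTiling_letterAt w).exists_tile_eq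
  exact ⟨C, letterAt_injective (C.letterAt_word.trans hC)⟩

theorem Qg_eq_count_word (C : PathConfig n) : Qg C = C.word.count minus := by
  simp only [Qg_eq_count_tile, ← count_letterAt, letterAt_word, vertexCount_word]

theorem Eg_eq_count_word (C : PathConfig n) :
    Eg C = C.word.count minus + C.word.count red := by
  simp only [Eg, Qg_eq_count_word, card_red_eq_count_tile, ← count_letterAt, letterAt_word,
    vertexCount_word]

theorem Qg_of_step_word {C C' : PathConfig n} (h : WordAlgebra.Step C.word C'.word) :
    Qg C' = Qg C + 1 := by
  rw [Qg_eq_count_word, Qg_eq_count_word, h.count_minus]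

theorem Eg_of_step_word {C C' : PathConfig n} (h : WordAlgebra.Step C.word C'.word) :
    Eg C' = Eg C := by
  rw [Eg_eq_count_word, Eg_eq_count_word, h.count_minus, h.count_red]
  omega

theorem dStep_iff_step_word {C C' : PathConfig n} :
    DStep C C' ↔ WordAlgebra.Step C.word C'.word := by
  rw [step_iff_splits, letterAt_word, letterAt_word]
  exact ⟨splits_tile_of_dStep, dStep_of_splits_tile⟩

end PathConfig

end Configurations

/-! ### Cohomology of the path -/

theorem cohDim_eq_finrank_map {A B M : Type} {E : Type*} [AddCommGroup A] [AddCommGroup B]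
    [AddCommGroup M] [AddCommGroup E] [Module (ZMod 2) A] [Module (ZMod 2) B] [Module (ZMod 2) M]
    [Module (ZMod 2) E] {f : A →ₗ[ZMod 2] B} {g : B →ₗ[ZMod 2] M} (ψ : B →ₗ[ZMod 2] E)
    (h : ∀ v ∈ LinearMap.ker g, v ∈ LinearMap.range f ↔ ψ v = 0) :
    cohDim f g = Module.finrank (ZMod 2) ((LinearMap.ker g).map ψ) := by
  have hker : (LinearMap.range f).comap (LinearMap.ker g).subtype =
      LinearMap.ker (ψ.domRestrict (LinearMap.ker g)) :=
    Submodule.ext fun v => h v v.2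
  rw [cohDim, hker, (ψ.domRestrict (LinearMap.ker g)).quotKerEquivRange.finrank_eq,
    LinearMap.range_domRestrict]

theorem sumLin_single {α β : Type} [Fintype α] [DecidableEq α] (r : α → β → Prop)
    (a : α) (b : β) : sumLin r (Pi.single a 1) b = if r a b then 1 else 0 := by
  change (∑ x, if r x b then (Pi.single a 1 : α → ZMod 2) x else 0) = _
  rw [Finset.sum_eq_single a (fun x _ hx => by simp [hx]) (by simp), Pi.single_eq_same]

section PathCohomology

open Letter WordAlgebra PathConfig

variable {n : ℕ}

/-- The configurations spanning `SC^k(A_n, m)`. -/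
abbrev GradedPathConfig (n : ℕ) (k m : ℤ) : Type :=
  {C : PathConfig n // (Qg C : ℤ) = k ∧ (Eg C : ℤ) = m}

variable {k k' m : ℤ}

theorem exists_word_eq_of_step (hk : k + 1 = k') {C : GradedPathConfig n k m} {w' : List Letter}
    (h : Step (word C.1) w') : ∃ C' : GradedPathConfig n k' m, word C'.1 = w' := by
  obtain ⟨C, hQ, hE⟩ := C
  obtain ⟨C', rfl⟩ := exists_word_eq (h.vertexCount_eq.trans C.vertexCount_word)
  have hC := Qg_of_step_word h
  have hC' := Eg_of_step_word h
  exact ⟨⟨C', by grind, by grind⟩, rfl⟩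

theorem exists_word_eq_of_step_word (hk : k + 1 = k') {C' : GradedPathConfig n k' m}
    {w : List Letter} (h : Step w (word C'.1)) :
    ∃ C : GradedPathConfig n k m, word C.1 = w := by
  obtain ⟨C', hQ, hE⟩ := C'
  obtain ⟨C, rfl⟩ := exists_word_eq (h.vertexCount_eq.symm.trans C'.vertexCount_word)
  have hC := Qg_of_step_word h
  have hC' := Eg_of_step_word h
  exact ⟨⟨C, by grind, by grind⟩, rfl⟩

/-- The embedding of `SC^k(A_n, m)` into the word algebra. -/
noncomputable def toWords (n : ℕ) (k m : ℤ) :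
    SC (SimpleGraph.pathGraph n) k m →ₗ[ZMod 2] WordAlgebra :=
  Fintype.linearCombination (ZMod 2) fun C => wordBasis (word C.1)

/-- The projection of the word algebra onto `SC^k(A_n, m)`. -/
noncomputable def fromWords (n : ℕ) (k m : ℤ) :
    WordAlgebra →ₗ[ZMod 2] SC (SimpleGraph.pathGraph n) k m :=
  LinearMap.pi fun C => wordBasis.coord (word C.1)

theorem toWords_single (C : GradedPathConfig n k m) :
    toWords n k m (Pi.single C 1) = wordBasis (word C.1) := by
  simp [toWords]

theorem fromWords_wordBasis_word (C : GradedPathConfig n k m) :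
    fromWords n k m (wordBasis (word C.1)) = Pi.single C 1 := by
  ext C'
  simp [fromWords, Finsupp.single_apply, Pi.single_apply, word_injective.eq_iff,
    Subtype.val_inj, eq_comm]

theorem fromWords_toWords (v : SC (SimpleGraph.pathGraph n) k m) :
    fromWords n k m (toWords n k m v) = v := by
  have h : fromWords n k m ∘ₗ toWords n k m = LinearMap.id :=
    LinearMap.pi_ext' fun C => LinearMap.ext_ring <| by
      simp [toWords_single, fromWords_wordBasis_word]
  exact LinearMap.congr_fun h v

theorem differential_wordBasis_word (hk : k + 1 = k') (C : GradedPathConfig n k m) :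
    differential (wordBasis (word C.1)) =
      ∑ C' : GradedPathConfig n k' m, if DStep C.1 C'.1 then wordBasis (word C'.1) else 0 := by
  refine wordBasis.ext_elem fun w' => ?_
  rw [repr_differential_wordBasis, map_sum, Finsupp.finsetSum_apply]
  by_cases hw : ∃ C' : GradedPathConfig n k' m, word C'.1 = w'
  · obtain ⟨C', rfl⟩ := hw
    rw [Finset.sum_eq_single C' (fun C'' _ hne => ?_) (by simp)]
    · split_ifs <;> simp_all [dStep_iff_step_word]
    · have hne' : word C''.1 ≠ word C'.1 := fun h => hne (Subtype.ext (word_injective h))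
      split_ifs <;> simp [hne']
  · rw [if_neg fun h => hw (exists_word_eq_of_step hk h), Finset.sum_eq_zero fun C' _ => ?_]
    have hne : word C'.1 ≠ w' := fun h => hw ⟨C', h⟩
    split_ifs <;> simp [hne]

theorem differential_toWords (hk : k + 1 = k') (v : SC (SimpleGraph.pathGraph n) k m) :
    differential (toWords n k m v) =
      toWords n k' m (Dgr (SimpleGraph.pathGraph n) k m k' m v) := by
  have h : differential ∘ₗ toWords n k m =
      toWords n k' m ∘ₗ Dgr (SimpleGraph.pathGraph n) k m k' m := by
    refine LinearMap.pi_ext' fun C => LinearMap.ext_ring ?_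
    simp only [LinearMap.comp_apply, LinearMap.single_apply, toWords_single,
      differential_wordBasis_word hk]
    simp only [toWords, Dgr, Fintype.linearCombination_apply, sumLin_single, ite_smul, one_smul,
      zero_smul]
  exact LinearMap.congr_fun h v

theorem fromWords_differential (hk : k + 1 = k') (x : WordAlgebra) :
    fromWords n k' m (differential x) =
      Dgr (SimpleGraph.pathGraph n) k m k' m (fromWords n k m x) := by
  have h : fromWords n k' m ∘ₗ differential =
      Dgr (SimpleGraph.pathGraph n) k m k' m ∘ₗ fromWords n k m := by
    refine wordBasis.ext fun w => funext fun C' => ?_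
    have hleft : fromWords n k' m (differential (wordBasis w)) C' =
        if Step w (word C'.1) then 1 else 0 := repr_differential_wordBasis w (word C'.1)
    rw [LinearMap.comp_apply, LinearMap.comp_apply, hleft]
    by_cases hw : ∃ C : GradedPathConfig n k m, word C.1 = w
    · obtain ⟨C, rfl⟩ := hw
      rw [fromWords_wordBasis_word, Dgr, sumLin_single, dStep_iff_step_word]
    · have hzero : fromWords n k m (wordBasis w) = 0 := by
        ext C
        have : w ≠ word C.1 := fun h => hw ⟨C, h.symm⟩
        simp [fromWords, this]
      rw [hzero, map_zero, if_neg fun h => hw (exists_word_eq_of_step_word hk h)]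
      rfl
  exact LinearMap.congr_fun h x

theorem mem_range_Dgr_iff {v : SC (SimpleGraph.pathGraph n) k m}
    (hv : v ∈ LinearMap.ker (Dgr (SimpleGraph.pathGraph n) k m (k + 1) m)) :
    v ∈ LinearMap.range (Dgr (SimpleGraph.pathGraph n) (k - 1) m k m) ↔
      (sort ∘ₗ toWords n k m) v = 0 := by
  rw [LinearMap.comp_apply]
  constructor
  · rintro ⟨u, rfl⟩
    rw [← differential_toWords (sub_add_cancel k 1), sort_differential]
  · intro h
    have hcycle : differential (toWords n k m v) = 0 := by
      rw [differential_toWords rfl, hv, map_zero]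
    have hv' := differential_contraction_add (toWords n k m v)
    rw [hcycle, h, map_zero, add_zero, add_zero] at hv'
    refine ⟨fromWords n (k - 1) m (contraction (toWords n k m v)), ?_⟩
    rw [← fromWords_differential (sub_add_cancel k 1), hv', fromWords_toWords]

theorem count_minus_word (C : GradedPathConfig n k m) : ((word C.1).count minus : ℤ) = k := by
  rw [← Qg_eq_count_word, C.2.1]

theorem count_red_word (C : GradedPathConfig n k m) : ((word C.1).count red : ℤ) = m - k := by
  have hE := C.2.2
  rw [Eg_eq_count_word, Nat.cast_add, count_minus_word] at hE
  linarith

theorem count_plus_word (C : GradedPathConfig n k m) :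
    ((word C.1).count plus : ℤ) = n + k - 2 * m := by
  have hvertex := vertexCount_eq_count (word C.1)
  rw [vertexCount_word] at hvertex
  linarith [count_minus_word C, count_red_word C, congrArg (Nat.cast (R := ℤ)) hvertex]

theorem sort_comp_toWords_eq_zero (h : ¬ (k = m ∧ 0 ≤ k ∧ k ≤ n)) :
    sort ∘ₗ toWords n k m = 0 := by
  refine LinearMap.pi_ext' fun C => LinearMap.ext_ring ?_
  simp only [LinearMap.comp_apply, LinearMap.single_apply, toWords_single]
  refine sort_wordBasis_of_red_mem (List.count_pos_iff.1 ?_)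
  have hplus := count_plus_word C
  have hminus := count_minus_word C
  have hred := count_red_word C
  omega

theorem sort_wordBasis_word {k : ℕ} (C : GradedPathConfig n k k) :
    sort (wordBasis (word C.1)) = wordBasis (sortedWord (n - k) k) := by
  have hplus := count_plus_word C
  have hminus := count_minus_word C
  have hred := count_red_word C
  rw [sort_wordBasis_of_red_notMem (List.count_eq_zero.1 (by omega))]
  congr 2 <;> omega

theorem exists_word_eq_sortedWord {k : ℕ} (hk : k ≤ n) :
    ∃ C : GradedPathConfig n k k, word C.1 = sortedWord (n - k) k := by
  obtain ⟨C, hC⟩ := exists_word_eq (n := n) (w := sortedWord (n - k) k)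
    (by simp [vertexCount, sortedWord, List.count_replicate, hk])
  refine ⟨⟨C, ?_, ?_⟩, hC⟩
  · simp [Qg_eq_count_word, hC, sortedWord, List.count_replicate]
  · simp [Eg_eq_count_word, hC, sortedWord, List.count_replicate]

theorem map_ker_Dgr_sort_comp_toWords {k : ℕ} (hk : k ≤ n) :
    (LinearMap.ker (Dgr (SimpleGraph.pathGraph n) k k (k + 1) k)).map (sort ∘ₗ toWords n k k) =
      Submodule.span (ZMod 2) {wordBasis (sortedWord (n - k) k)} := by
  apply le_antisymm
  · rintro _ ⟨v, -, rfl⟩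
    rw [LinearMap.comp_apply, toWords, Fintype.linearCombination_apply, map_sum]
    refine Submodule.sum_mem _ fun C _ => ?_
    rw [map_smul, sort_wordBasis_word]
    exact Submodule.smul_mem _ _ (Submodule.mem_span_singleton_self _)
  · rw [Submodule.span_singleton_le_iff_mem]
    obtain ⟨C, hC⟩ := exists_word_eq_sortedWord hk
    have hsort : sort (wordBasis (word C.1)) = wordBasis (word C.1) := by
      rw [sort_wordBasis_word, hC]
    refine ⟨Pi.single C 1, ?_, ?_⟩
    · have hcycle : toWords n (k + 1) k
          (Dgr (SimpleGraph.pathGraph n) k k (k + 1) k (Pi.single C 1)) = 0 := by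
        rw [← differential_toWords rfl, toWords_single, ← hsort, differential_sort]
      rw [SetLike.mem_coe, LinearMap.mem_ker, ← fromWords_toWords (Dgr _ _ _ _ _ _), hcycle,
        map_zero]
    · rw [LinearMap.comp_apply, toWords_single, hsort, hC]

end PathCohomology

/-- the Seifert cohomology of the Dynkin diagram `A_n` (the path on `n`
vertices): `dim SH^k(A_n,m) = 1` iff `k = m` and `0 ≤ k ≤ n`, and `0` otherwise. -/
theorem SHdim_pathGraph (n : ℕ) (hn : 1 ≤ n) (k m : ℤ) :
    SHdim (SimpleGraph.pathGraph n) k m =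
      if k = m ∧ 0 ≤ k ∧ k ≤ (n : ℤ) then 1 else 0 := by
  rw [SHdim, cohDim_eq_finrank_map (WordAlgebra.sort ∘ₗ toWords n k m) fun _ => mem_range_Dgr_iff]
  split_ifs with h
  · obtain ⟨rfl, hk, hkn⟩ := h
    lift k to ℕ using hk
    rw [map_ker_Dgr_sort_comp_toWords (by exact_mod_cast hkn),
      finrank_span_singleton (WordAlgebra.wordBasis.ne_zero _)]
  · rw [sort_comp_toWords_eq_zero h, Submodule.map_zero, finrank_bot]

end Seifert
end
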